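/- Assume the additive-noise setting, let c ∈ [0,∞), q ∈ [2,∞) and assume that x·μ(x) ≤ c(1+x²) for all x ∈ (0,∞). Then ‖ sup_{t∈[0,T]} (X_t)² ‖_{L^q(Ω;ℝ)} ≤ ‖ (X_0)² ‖_{L^q(Ω;ℝ)} + 2cT · ( sup_{s∈[0,T]} ‖X_s‖_{L^{2q}(Ω;ℝ)} )² + √(2Tq³/(q−1)) · sup_{s∈[0,T]} ‖X_s‖_{L^q(Ω;ℝ)} + T(2c+1). -/

import Mathlib

open MeasureTheory ProbabilityTheory Filter Set
open scoped ENNReal NNReal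

noncomputable section

/-!
Summing `X_t² - X_s² = 2 X_s (X_t - X_s) + (X_t - X_s)²` over the cells of a partition of `[0, T]`
replaces Itô's formula: up to an error that vanishes with the mesh, `X_t²` is at most `X_0²`, plus
`2c (T + Riemann sum of X²)` from the drift, plus twice the discrete stochastic integral
`∑ X_{t_j} (W_{t_{j+1}} - W_{t_j})`, plus the sum of the squared noise increments, which tends to
`T` almost surely along a suitable sequence of partitions.

The maximum of the discrete stochastic integral is controlled by Doob's `L^q` inequality, which
costs `q / (q - 1)`, and by the `L^q` norm of its terminal value. A second-order Taylor expansion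
of `|m + d|^q` shows that each step raises the `q`-th moment by at most
`q (q - 1) / 2 * K^(q - 2) * B² * Δt` up to `o(Δt)`, as long as the integral and `X` have `L^q`
norms at most `K` and `B`; this keeps the norm below every `K > √(q (q - 1) T / 2) * B`. The limit
along the partitions is taken by Fatou's lemma, and the constants combine to
`2 * q / (q - 1) * √(q (q - 1) T / 2) = √(2 T q³ / (q - 1))`.
-/

lemma hasDerivAt_mul_abs_rpow {p : ℝ} (hp : 0 ≤ p) (x : ℝ) :
    HasDerivAt (fun y : ℝ => y * |y| ^ p) ((p + 1) * |x| ^ p) x := by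
  rcases eq_or_ne x 0 with rfl | hx
  · have hcont : Continuous fun y : ℝ => |y| ^ p := continuous_abs.rpow_const fun _ => .inr hp
    have hslope : (p + 1) * |(0 : ℝ)| ^ p = |(0 : ℝ)| ^ p := by
      rcases hp.eq_or_lt with rfl | hp
      · simp
      · simp [hp.ne']
    rw [hasDerivAt_iff_tendsto_slope, hslope]
    refine (hcont.tendsto 0).mono_left nhdsWithin_le_nhds |>.congr' ?_
    filter_upwards [self_mem_nhdsWithin] with y (hy : y ≠ 0)
    simp [slope_def_field, mul_div_cancel_left₀ _ hy]
  · have hpow := (hasDerivAt_abs hx).rpow_const (p := p) (.inl (abs_ne_zero.2 hx))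
    refine ((hasDerivAt_id x).mul hpow).congr_deriv ?_
    have hsplit : |x| ^ p = x * SignType.sign x * |x| ^ (p - 1) := by
      rw [self_mul_sign, Real.rpow_sub_one (abs_ne_zero.2 hx)]
      field_simp
    simp only [id_eq, hsplit]
    ring

lemma le_add_deriv_add_of_deriv2_le {f f' f'' : ℝ → ℝ} {K : ℝ}
    (hf : ∀ t ∈ Icc (0 : ℝ) 1, HasDerivAt f (f' t) t)
    (hf' : ∀ t ∈ Icc (0 : ℝ) 1, HasDerivAt f' (f'' t) t)
    (hK : ∀ t ∈ Icc (0 : ℝ) 1, f'' t ≤ K) :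
    f 1 ≤ f 0 + f' 0 + K / 2 := by
  have hlin (t : ℝ) : HasDerivAt (fun t => f' 0 + K * t) K t := by
    simpa using ((hasDerivAt_id t).const_mul K).const_add (f' 0)
  have hquad (t : ℝ) : HasDerivAt (fun t => f 0 + (f' 0 * t + K / 2 * t ^ 2)) (f' 0 + K * t) t := by
    refine ((((hasDerivAt_id t).const_mul (f' 0)).add
      ((hasDerivAt_pow 2 t).const_mul (K / 2))).const_add (f 0)).congr_deriv ?_
    simp only [Nat.cast_ofNat, Nat.add_one_sub_one, pow_one]
    ring
  have hfirst : ∀ t ∈ Icc (0 : ℝ) 1, f' t ≤ f' 0 + K * t :=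
    image_le_of_deriv_right_le_deriv_boundary
      (fun t ht => (hf' t ht).continuousAt.continuousWithinAt)
      (fun t ht => (hf' t (Ico_subset_Icc_self ht)).hasDerivWithinAt) (by simp)
      (fun t _ => (hlin t).continuousAt.continuousWithinAt)
      (fun t _ => (hlin t).hasDerivWithinAt) fun t ht => hK t (Ico_subset_Icc_self ht)
  have hsecond := image_le_of_deriv_right_le_deriv_boundary
      (fun t ht => (hf t ht).continuousAt.continuousWithinAt)
      (fun t ht => (hf t (Ico_subset_Icc_self ht)).hasDerivWithinAt) (by simp)
      (fun t _ => (hquad t).continuousAt.continuousWithinAt)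
      (fun t _ => (hquad t).hasDerivWithinAt) (fun t ht => hfirst t (Ico_subset_Icc_self ht))
      (right_mem_Icc.2 zero_le_one)
  linarith

lemma abs_add_rpow_le_taylor {q : ℝ} (hq : 2 ≤ q) (m d : ℝ) :
    |m + d| ^ q ≤ |m| ^ q + q * (|m| ^ (q - 2) * m * d)
      + q * (q - 1) / 2 * ((|m| + |d|) ^ (q - 2) * d ^ 2) := by
  have hseg (t : ℝ) : HasDerivAt (fun t => m + t * d) d t := by
    simpa using ((hasDerivAt_id t).mul_const d).const_add m
  have hbound : ∀ t ∈ Icc (0 : ℝ) 1, q * (q - 1) * (|m + t * d| ^ (q - 2) * d ^ 2)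
      ≤ q * (q - 1) * ((|m| + |d|) ^ (q - 2) * d ^ 2) := by
    intro t ht
    have habs : |m + t * d| ≤ |m| + |d| := calc
      |m + t * d| ≤ |m| + |t| * |d| := (abs_add_le _ _).trans_eq (by rw [abs_mul])
      _ ≤ |m| + |d| := by
        rw [abs_of_nonneg ht.1]
        gcongr
        exact mul_le_of_le_one_left (abs_nonneg d) ht.2
    have hpow := Real.rpow_le_rpow (abs_nonneg _) habs (by linarith : 0 ≤ q - 2)
    exact mul_le_mul_of_nonneg_left (mul_le_mul_of_nonneg_right hpow (sq_nonneg d)) (by nlinarith)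
  have hderiv (t : ℝ) : HasDerivAt (fun t => |m + t * d| ^ q)
      (q * d * ((m + t * d) * |m + t * d| ^ (q - 2))) t := by
    have hcomp := (hasDerivAt_abs_rpow (m + t * d) (by linarith : 1 < q)).comp t (hseg t)
    exact hcomp.congr_deriv (by ring)
  have hderiv2 (t : ℝ) : HasDerivAt (fun t => q * d * ((m + t * d) * |m + t * d| ^ (q - 2)))
      (q * (q - 1) * (|m + t * d| ^ (q - 2) * d ^ 2)) t := by
    have hcomp := ((hasDerivAt_mul_abs_rpow (by linarith : 0 ≤ q - 2) (m + t * d)).comp t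
      (hseg t)).const_mul (q * d)
    exact hcomp.congr_deriv (by ring)
  have htaylor := le_add_deriv_add_of_deriv2_le (fun t _ => hderiv t) (fun t _ => hderiv2 t) hbound
  simp only [one_mul, zero_mul, add_zero] at htaylor
  linarith

-- The factor `p` makes the remainder vanish for `p = 0`: with `p = q - 2`, it adds a multiple of
-- `v ^ (q / 2)` to the moment in a step of variance `v`, which is `o(v)` only for `q > 2`.
lemma exists_add_rpow_le {p η : ℝ} (hp : 0 ≤ p) (hη : 0 < η) :
    ∃ C, 0 ≤ C ∧ ∀ a b : ℝ, 0 ≤ a → 0 ≤ b → (a + b) ^ p ≤ (1 + η) * a ^ p + p * C * b ^ p := by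
  rcases hp.eq_or_lt with rfl | hp
  · exact ⟨0, le_rfl, fun a b _ _ => by simp [hη.le]⟩
  set r := (1 + η) ^ p⁻¹ - 1
  have hr : 0 < r := sub_pos.2 (Real.one_lt_rpow (by linarith) (inv_pos.2 hp))
  have hrpow : (1 + r) ^ p = 1 + η := by
    rw [add_sub_cancel, Real.rpow_inv_rpow (by linarith) hp.ne']
  refine ⟨p⁻¹ * (1 / r + 1) ^ p, by positivity, fun a b ha hb => ?_⟩
  rw [mul_inv_cancel_left₀ hp.ne']
  rcases le_total b (r * a) with hba | hba
  · calc (a + b) ^ p ≤ ((1 + r) * a) ^ p := Real.rpow_le_rpow (by positivity) (by linarith) hp.le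
      _ = (1 + η) * a ^ p := by rw [Real.mul_rpow (by positivity) ha, hrpow]
      _ ≤ _ := le_add_of_nonneg_right (by positivity)
  · have hab : a ≤ 1 / r * b := by rwa [div_mul_eq_mul_div, one_mul, le_div_iff₀' hr]
    calc (a + b) ^ p ≤ ((1 / r + 1) * b) ^ p :=
          Real.rpow_le_rpow (by positivity) (by linarith) hp.le
      _ = (1 / r + 1) ^ p * b ^ p := Real.mul_rpow (by positivity) hb
      _ ≤ _ := le_add_of_nonneg_left (by positivity)

lemma exists_abs_add_rpow_le {q η : ℝ} (hq : 2 ≤ q) (hη : 0 < η) :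
    ∃ C, 0 ≤ C ∧ ∀ m d : ℝ, |m + d| ^ q ≤ |m| ^ q + q * (|m| ^ (q - 2) * m * d)
      + q * (q - 1) / 2 * ((1 + η) * (|m| ^ (q - 2) * d ^ 2) + (q - 2) * C * |d| ^ q) := by
  obtain ⟨C, hC, hadd⟩ := exists_add_rpow_le (sub_nonneg.2 hq) hη
  refine ⟨C, hC, fun m d => (abs_add_rpow_le_taylor hq m d).trans ?_⟩
  have hsplit : |d| ^ q = |d| ^ (q - 2) * d ^ 2 := by
    rw [← sq_abs, ← Real.rpow_two, ← Real.rpow_add' (abs_nonneg d) (by linarith), sub_add_cancel]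
  have hcoef : 0 ≤ q * (q - 1) / 2 := by nlinarith
  rw [hsplit]
  gcongr
  linarith [mul_le_mul_of_nonneg_right (hadd |m| |d| (abs_nonneg m) (abs_nonneg d)) (sq_nonneg d)]

section Holder

variable {Ω : Type*} {mΩ : MeasurableSpace Ω} {P : Measure Ω}

lemma integrable_rpow_mul_rpow {f g : Ω → ℝ} {a b : ℝ} (ha : 0 ≤ a) (hb : 0 ≤ b) (hab : a + b = 1)
    (hf : Integrable f P) (hg : Integrable g P) (hf0 : 0 ≤ f) (hg0 : 0 ≤ g) :
    Integrable (fun ω => f ω ^ a * g ω ^ b) P := by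
  refine ((hf.const_mul a).add (hg.const_mul b)).mono' ?_ (.of_forall fun ω => ?_)
  · exact ((hf.1.aemeasurable.pow_const a).mul (hg.1.aemeasurable.pow_const b)).aestronglyMeasurable
  · rw [Real.norm_of_nonneg (mul_nonneg (Real.rpow_nonneg (hf0 ω) a) (Real.rpow_nonneg (hg0 ω) b))]
    exact Real.geom_mean_le_arith_mean2_weighted ha hb (hf0 ω) (hg0 ω) hab

lemma integral_rpow_mul_rpow_le {f g : Ω → ℝ} {a b : ℝ} (ha : 0 ≤ a) (hb : 0 ≤ b) (hab : a + b = 1)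
    (hf : Integrable f P) (hg : Integrable g P) (hf0 : 0 ≤ f) (hg0 : 0 ≤ g) :
    ∫ ω, f ω ^ a * g ω ^ b ∂P ≤ (∫ ω, f ω ∂P) ^ a * (∫ ω, g ω ∂P) ^ b := by
  have hofReal (ω : Ω) : ENNReal.ofReal (f ω ^ a * g ω ^ b)
      = ENNReal.ofReal (f ω) ^ a * ENNReal.ofReal (g ω) ^ b := by
    rw [ENNReal.ofReal_mul (Real.rpow_nonneg (hf0 ω) a), ENNReal.ofReal_rpow_of_nonneg (hf0 ω) ha,
      ENNReal.ofReal_rpow_of_nonneg (hg0 ω) hb]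
  have hint := integrable_rpow_mul_rpow ha hb hab hf hg hf0 hg0
  have hnonneg (ω : Ω) : 0 ≤ f ω ^ a * g ω ^ b :=
    mul_nonneg (Real.rpow_nonneg (hf0 ω) a) (Real.rpow_nonneg (hg0 ω) b)
  have hf_int := integral_nonneg hf0 (μ := P)
  have hg_int := integral_nonneg hg0 (μ := P)
  rw [← ENNReal.ofReal_le_ofReal_iff (by positivity),
    ofReal_integral_eq_lintegral_ofReal hint (.of_forall hnonneg),
    ENNReal.ofReal_mul (by positivity), ← ENNReal.ofReal_rpow_of_nonneg hf_int ha,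
    ← ENNReal.ofReal_rpow_of_nonneg hg_int hb,
    ofReal_integral_eq_lintegral_ofReal hf (.of_forall hf0),
    ofReal_integral_eq_lintegral_ofReal hg (.of_forall hg0), lintegral_congr hofReal]
  exact ENNReal.lintegral_mul_norm_pow_le hf.1.aemeasurable.ennreal_ofReal
    hg.1.aemeasurable.ennreal_ofReal ha hb hab

lemma memLp_ofReal_iff_integrable_abs_rpow {f : Ω → ℝ} {q : ℝ} (hq : 0 < q)
    (hf : AEStronglyMeasurable f P) :
    MemLp f (ENNReal.ofReal q) P ↔ Integrable (fun ω => |f ω| ^ q) P := by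
  rw [← integrable_norm_rpow_iff hf (by simpa using hq) ENNReal.ofReal_ne_top,
    ENNReal.toReal_ofReal hq.le]
  simp only [Real.norm_eq_abs]

variable {f g : Ω → ℝ} {q r s : ℝ}

lemma integrable_rpow_mul_rpow_of_add_eq (hf0 : 0 ≤ f) (hg0 : 0 ≤ g) (hq : 0 < q)
    (hr : 0 ≤ r) (hs : 0 ≤ s) (hrs : r + s = q)
    (hf : Integrable (fun ω => f ω ^ q) P) (hg : Integrable (fun ω => g ω ^ q) P) :
    Integrable (fun ω => f ω ^ r * g ω ^ s) P := by
  have hint := integrable_rpow_mul_rpow (div_nonneg hr hq.le) (div_nonneg hs hq.le)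
    (by rw [← add_div, hrs, div_self hq.ne']) hf hg
    (fun ω => Real.rpow_nonneg (hf0 ω) q) fun ω => Real.rpow_nonneg (hg0 ω) q
  simpa only [← Real.rpow_mul (hf0 _), ← Real.rpow_mul (hg0 _), mul_div_cancel₀ _ hq.ne'] using hint

lemma integral_rpow_mul_rpow_le_of_add_eq (hf0 : 0 ≤ f) (hg0 : 0 ≤ g) (hq : 0 < q)
    (hr : 0 ≤ r) (hs : 0 ≤ s) (hrs : r + s = q)
    (hf : Integrable (fun ω => f ω ^ q) P) (hg : Integrable (fun ω => g ω ^ q) P) :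
    ∫ ω, f ω ^ r * g ω ^ s ∂P
      ≤ (∫ ω, f ω ^ q ∂P) ^ (r / q) * (∫ ω, g ω ^ q ∂P) ^ (s / q) := by
  have hle := integral_rpow_mul_rpow_le (div_nonneg hr hq.le) (div_nonneg hs hq.le)
    (by rw [← add_div, hrs, div_self hq.ne']) hf hg
    (fun ω => Real.rpow_nonneg (hf0 ω) q) fun ω => Real.rpow_nonneg (hg0 ω) q
  simpa only [← Real.rpow_mul (hf0 _), ← Real.rpow_mul (hg0 _), mul_div_cancel₀ _ hq.ne'] using hle

lemma integral_rpow_mul_rpow_le_of_integral_le {K B : ℝ} (hK : 0 ≤ K) (hB : 0 ≤ B)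
    (hf0 : 0 ≤ f) (hg0 : 0 ≤ g) (hq : 0 < q) (hr : 0 ≤ r) (hs : 0 ≤ s) (hrs : r + s = q)
    (hf : Integrable (fun ω => f ω ^ q) P) (hg : Integrable (fun ω => g ω ^ q) P)
    (hfK : ∫ ω, f ω ^ q ∂P ≤ K ^ q) (hgB : ∫ ω, g ω ^ q ∂P ≤ B ^ q) :
    ∫ ω, f ω ^ r * g ω ^ s ∂P ≤ K ^ r * B ^ s := by
  calc ∫ ω, f ω ^ r * g ω ^ s ∂P
      ≤ (∫ ω, f ω ^ q ∂P) ^ (r / q) * (∫ ω, g ω ^ q ∂P) ^ (s / q) :=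
        integral_rpow_mul_rpow_le_of_add_eq hf0 hg0 hq hr hs hrs hf hg
    _ ≤ (K ^ q) ^ (r / q) * (B ^ q) ^ (s / q) := by
      have hf_int := integral_nonneg (μ := P) (f := fun ω => f ω ^ q) fun ω =>
        Real.rpow_nonneg (hf0 ω) q
      have hg_int := integral_nonneg (μ := P) (f := fun ω => g ω ^ q) fun ω =>
        Real.rpow_nonneg (hg0 ω) q
      gcongr
    _ = K ^ r * B ^ s := by
      rw [← Real.rpow_mul hK, ← Real.rpow_mul hB, mul_div_cancel₀ _ hq.ne',
        mul_div_cancel₀ _ hq.ne']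

end Holder

section Doob

lemma mul_mul_rpow_sub_one_le {q a b : ℝ} (hq : 1 < q) (ha : 0 ≤ a) (hb : 0 ≤ b) :
    q * (a * b ^ (q - 1)) ≤ a ^ q + (q - 1) * b ^ q := by
  have hq0 : 0 < q := by linarith
  have hyoung := Real.geom_mean_le_arith_mean2_weighted (w₁ := 1 / q) (w₂ := (q - 1) / q)
    (by positivity) (div_nonneg (by linarith) hq0.le) (Real.rpow_nonneg ha q)
    (Real.rpow_nonneg hb q) (by field_simp; ring)
  rw [← Real.rpow_mul ha, ← Real.rpow_mul hb, mul_div_cancel₀ _ hq0.ne', mul_div_cancel₀ _ hq0.ne',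
    Real.rpow_one] at hyoung
  calc q * (a * b ^ (q - 1)) ≤ q * (1 / q * a ^ q + (q - 1) / q * b ^ q) := by gcongr
    _ = a ^ q + (q - 1) * b ^ q := by field_simp

lemma mul_rpow_sub_one {q a : ℝ} (hq : q ≠ 0) (ha : 0 ≤ a) : a * a ^ (q - 1) = a ^ q := by
  rw [← Real.rpow_one_add' ha (by simpa), add_sub_cancel]

lemma sum_partialSups_rpow_mul_sub_le {q : ℝ} {u : ℕ → ℝ} (hq : 1 < q) (hu : 0 ≤ u) (n : ℕ) :
    ∑ k ∈ Finset.range n, partialSups u k ^ (q - 1) * (u (k + 1) - u k) * q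
      ≤ q * (u n * partialSups u n ^ (q - 1)) - (q - 1) * partialSups u n ^ q := by
  induction n with
  | zero =>
    simp only [Finset.range_zero, Finset.sum_empty, partialSups_zero,
      mul_rpow_sub_one (by linarith : q ≠ 0) (hu 0)]
    linarith [Real.rpow_nonneg (hu 0) q]
  | succ n ih =>
    have hS : 0 ≤ partialSups u n := (hu n).trans (le_partialSups u n)
    rw [Finset.sum_range_succ, partialSups_add_one]
    rcases le_total (u (n + 1)) (partialSups u n) with hle | hle
    · rw [sup_eq_left.2 hle]
      linarith
    · rw [sup_eq_right.2 hle, mul_rpow_sub_one (by linarith) (hu (n + 1))]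
      linarith [mul_mul_rpow_sub_one_le hq (hu (n + 1)) hS]

variable {Ω : Type*} {mΩ : MeasurableSpace Ω} {P : Measure Ω} {f : ℕ → Ω → ℝ} {q : ℝ}

lemma stronglyMeasurable_partialSups {k : ℕ} (hf : ∀ j ≤ k, StronglyMeasurable (f j)) :
    StronglyMeasurable (partialSups f k) := by
  rw [partialSups_apply]
  exact (Finset.measurable_sup' _ fun j hj =>
    (hf j (Finset.mem_Iic.1 hj)).measurable).stronglyMeasurable

lemma partialSups_nonneg (hf0 : 0 ≤ f) (k : ℕ) : 0 ≤ partialSups f k :=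
  (hf0 k).trans (le_partialSups f k)

lemma partialSups_add_one_apply (k : ℕ) (ω : Ω) :
    partialSups f (k + 1) ω = max (partialSups f k ω) (f (k + 1) ω) := by
  rw [partialSups_add_one, Pi.sup_apply]

lemma integrable_partialSups_rpow (hq : 0 ≤ q) (hf0 : 0 ≤ f)
    (hint : ∀ k, Integrable (fun ω => f k ω ^ q) P) (k : ℕ) :
    Integrable (fun ω => partialSups f k ω ^ q) P := by
  induction k with
  | zero => simpa using hint 0
  | succ k ih =>
    refine (ih.sup (hint (k + 1))).congr (.of_forall fun ω => ?_)
    simp only [Pi.sup_apply, partialSups_add_one_apply]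
    exact ((Real.monotoneOn_rpow_Ici_of_exponent_nonneg hq).map_max
      (partialSups_nonneg hf0 k ω) (hf0 (k + 1) ω)).symm

lemma submartingale_abs_of_martingale {𝒢 : Filtration ℕ mΩ} (hf : Martingale f 𝒢 P) :
    Submartingale (fun k ω => |f k ω|) 𝒢 P :=
  hf.submartingale.sup hf.neg.submartingale

variable [IsFiniteMeasure P] {𝒢 : Filtration ℕ mΩ}

lemma integral_mul_sub_nonneg_of_submartingale (hf : Submartingale f 𝒢 P) {i j : ℕ} (hij : i ≤ j)
    {Z : Ω → ℝ} (hZ : StronglyMeasurable[𝒢 i] Z) (hZ0 : 0 ≤ Z)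
    (hint : Integrable (Z * (f j - f i)) P) : 0 ≤ ∫ ω, (Z * (f j - f i)) ω ∂P := by
  rw [← integral_condExp (𝒢.le i)]
  refine integral_nonneg_of_ae ?_
  filter_upwards [condExp_mul_of_stronglyMeasurable_left hZ hint
    ((hf.integrable j).sub (hf.integrable i)), hf.condExp_sub_nonneg hij] with ω hpull hnonneg
  rw [hpull]
  exact mul_nonneg (hZ0 ω) hnonneg

lemma integral_partialSups_rpow_mul_le (hq : 1 < q) (hf : Submartingale f 𝒢 P) (hf0 : 0 ≤ f)
    (hint : ∀ k, Integrable (fun ω => f k ω ^ q) P) (n : ℕ) :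
    (q - 1) * ∫ ω, partialSups f n ω ^ q ∂P
      ≤ q * ∫ ω, f n ω ^ (1 : ℝ) * partialSups f n ω ^ (q - 1) ∂P := by
  have hmul (j k : ℕ) : Integrable (fun ω => f j ω ^ (1 : ℝ) * partialSups f k ω ^ (q - 1)) P :=
    integrable_rpow_mul_rpow_of_add_eq (hf0 j) (partialSups_nonneg hf0 k) (by linarith)
      zero_le_one (by linarith) (by ring) (hint j)
      (integrable_partialSups_rpow (by linarith) hf0 hint k)
  have hS := integrable_partialSups_rpow (P := P) (by linarith) hf0 hint n
  let Z (k : ℕ) (ω : Ω) : ℝ := partialSups f k ω ^ (q - 1)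
  have hZ (k : ℕ) : StronglyMeasurable[𝒢 k] (Z k) :=
    (stronglyMeasurable_partialSups (mΩ := 𝒢 k) fun j hj =>
      (hf.stronglyAdapted j).mono (𝒢.mono hj)).measurable.pow_const (q - 1) |>.stronglyMeasurable
  have hZ_int (k : ℕ) : Integrable (Z k * (f (k + 1) - f k)) P :=
    ((hmul (k + 1) k).sub (hmul k k)).congr (.of_forall fun ω => by
      simp only [Z, Pi.mul_apply, Pi.sub_apply, Real.rpow_one]; ring)
  have hZ_nonneg (k : ℕ) : 0 ≤ ∫ ω, (Z k * (f (k + 1) - f k)) ω ∂P :=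
    integral_mul_sub_nonneg_of_submartingale hf k.le_succ (hZ k)
      (fun ω => Real.rpow_nonneg (partialSups_nonneg hf0 k ω) _) (hZ_int k)
  have hpath (ω : Ω) : ∑ k ∈ Finset.range n, (Z k * (f (k + 1) - f k)) ω * q
      ≤ q * (f n ω ^ (1 : ℝ) * partialSups f n ω ^ (q - 1)) - (q - 1) * partialSups f n ω ^ q := by
    simpa only [Z, Pi.mul_apply, Pi.sub_apply, Pi.partialSups_apply, Real.rpow_one] using
      sum_partialSups_rpow_mul_sub_le hq (fun k => hf0 k ω) n
  have hmono := integral_mono (integrable_finsetSum _ fun k _ => (hZ_int k).mul_const q)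
    (((hmul n n).const_mul q).sub (hS.const_mul (q - 1))) hpath
  have hsum := Finset.sum_nonneg fun k (_ : k ∈ Finset.range n) =>
    mul_nonneg (hZ_nonneg k) (by linarith : 0 ≤ q)
  simp only [Pi.sub_apply] at hmono
  rw [integral_finsetSum _ fun k _ => (hZ_int k).mul_const q,
    integral_sub ((hmul n n).const_mul q) (hS.const_mul (q - 1)),
    integral_const_mul, integral_const_mul] at hmono
  simp only [integral_mul_const] at hmono
  linarith

lemma integral_partialSups_rpow_le (hq : 1 < q) (hf : Submartingale f 𝒢 P) (hf0 : 0 ≤ f)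
    (hint : ∀ k, Integrable (fun ω => f k ω ^ q) P) (n : ℕ) :
    ∫ ω, partialSups f n ω ^ q ∂P ≤ (q / (q - 1)) ^ q * ∫ ω, f n ω ^ q ∂P := by
  have hq0 : 0 < q := by linarith
  have hS0 := partialSups_nonneg hf0 n
  set I := ∫ ω, partialSups f n ω ^ q ∂P
  set J := ∫ ω, f n ω ^ q ∂P
  have hI : 0 ≤ I := integral_nonneg fun ω => Real.rpow_nonneg (hS0 ω) q
  have hJ : 0 ≤ J := integral_nonneg fun ω => Real.rpow_nonneg (hf0 n ω) q
  have hq1 : 0 ≤ q / (q - 1) := div_nonneg hq0.le (by linarith)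
  rcases hI.eq_or_lt with hI | hI
  · rw [← hI]
    positivity
  have hholder : (q - 1) * I ≤ q * (J ^ (1 / q) * I ^ ((q - 1) / q)) :=
    (integral_partialSups_rpow_mul_le hq hf hf0 hint n).trans <| mul_le_mul_of_nonneg_left
      (integral_rpow_mul_rpow_le_of_add_eq (hf0 n) hS0 hq0 zero_le_one (by linarith) (by ring)
        (hint n) (integrable_partialSups_rpow hq0.le hf0 hint n)) hq0.le
  have hsplit : I = I ^ (1 / q) * I ^ ((q - 1) / q) := by
    rw [← Real.rpow_add hI, ← add_div, add_sub_cancel, div_self hq0.ne', Real.rpow_one]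
  have hroot : I ^ (1 / q) ≤ q / (q - 1) * J ^ (1 / q) := by
    rw [div_mul_eq_mul_div, le_div_iff₀ (by linarith)]
    refine le_of_mul_le_mul_right ?_ (Real.rpow_pos_of_pos hI ((q - 1) / q))
    calc I ^ (1 / q) * (q - 1) * I ^ ((q - 1) / q) = (q - 1) * I := by
          linear_combination -(q - 1) * hsplit
      _ ≤ q * J ^ (1 / q) * I ^ ((q - 1) / q) := by linarith
  calc I = (I ^ (1 / q)) ^ q := by
        rw [← Real.rpow_mul hI.le, one_div_mul_cancel hq0.ne', Real.rpow_one]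
    _ ≤ (q / (q - 1) * J ^ (1 / q)) ^ q := by gcongr
    _ = (q / (q - 1)) ^ q * J := by
      rw [Real.mul_rpow hq1 (by positivity), ← Real.rpow_mul hJ, one_div_mul_cancel hq0.ne',
        Real.rpow_one]

end Doob

/-- The absolute moment `E|Z| ^ p` of a standard Gaussian variable `Z`. -/
def gaussianAbsMoment (p : ℝ) : ℝ := ∫ x, |x| ^ p ∂gaussianReal 0 1

lemma gaussianAbsMoment_nonneg (p : ℝ) : 0 ≤ gaussianAbsMoment p :=
  integral_nonneg fun _ => by positivity

lemma integrable_abs_rpow_gaussianReal {p : ℝ} (hp : 0 < p) (v : ℝ≥0) :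
    Integrable (fun x => |x| ^ p) (gaussianReal 0 v) :=
  (memLp_ofReal_iff_integrable_abs_rpow hp aestronglyMeasurable_id).1
    (memLp_id_gaussianReal' _ ENNReal.ofReal_ne_top)

lemma integral_abs_rpow_gaussianReal (p : ℝ) (v : ℝ≥0) :
    ∫ x, |x| ^ p ∂gaussianReal 0 v = (v : ℝ) ^ (p / 2) * gaussianAbsMoment p := by
  have hscale : gaussianReal 0 v = (gaussianReal 0 1).map (√v * ·) := by
    rw [gaussianReal_map_const_mul, mul_zero, mul_one]
    congr
    ext
    simp
  have hmeas : AEStronglyMeasurable (fun x : ℝ => |x| ^ p) ((gaussianReal 0 1).map (√v * ·)) :=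
    (measurable_norm.pow_const p).aestronglyMeasurable
  rw [hscale, integral_map (measurable_const_mul _).aemeasurable hmeas, gaussianAbsMoment,
    ← integral_const_mul]
  refine integral_congr_ae (.of_forall fun x => ?_)
  dsimp only
  rw [abs_mul, Real.mul_rpow (abs_nonneg _) (abs_nonneg _), abs_of_nonneg (Real.sqrt_nonneg _),
    Real.sqrt_eq_rpow, ← Real.rpow_mul v.coe_nonneg, one_div_mul_eq_div]

/-- A discrete-time Gaussian noise `ξ` with variances `v` relative to the filtration `𝒢`: the `j`-th
innovation is revealed at time `j + 1`, is centred Gaussian with variance `v j` (possibly zero), and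
is independent of the past `𝒢 j`. -/
structure IsGaussianNoise {Ω : Type*} {mΩ : MeasurableSpace Ω} (ξ : ℕ → Ω → ℝ)
    (𝒢 : Filtration ℕ mΩ) (v : ℕ → ℝ≥0) (P : Measure Ω) : Prop where
  measurable_succ (j : ℕ) : Measurable[𝒢 (j + 1)] (ξ j)
  map_eq (j : ℕ) : P.map (ξ j) = gaussianReal 0 (v j)
  indep (j : ℕ) : Indep (MeasurableSpace.comap (ξ j) inferInstance) (𝒢 j) P

namespace IsGaussianNoise

variable {Ω : Type*} {mΩ : MeasurableSpace Ω} {P : Measure Ω} {ξ : ℕ → Ω → ℝ}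
  {𝒢 : Filtration ℕ mΩ} {v : ℕ → ℝ≥0}

lemma measurable (hξ : IsGaussianNoise ξ 𝒢 v P) (j : ℕ) : Measurable (ξ j) :=
  (hξ.measurable_succ j).mono (𝒢.le (j + 1)) le_rfl

lemma integrable_comp (hξ : IsGaussianNoise ξ 𝒢 v P) (j : ℕ) {φ : ℝ → ℝ}
    (hφ : Integrable φ (gaussianReal 0 (v j))) : Integrable (fun ω => φ (ξ j ω)) P := by
  rw [← hξ.map_eq j] at hφ
  exact hφ.comp_measurable (hξ.measurable j)

lemma integral_comp (hξ : IsGaussianNoise ξ 𝒢 v P) (j : ℕ) {φ : ℝ → ℝ}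
    (hφ : Integrable φ (gaussianReal 0 (v j))) :
    ∫ ω, φ (ξ j ω) ∂P = ∫ x, φ x ∂gaussianReal 0 (v j) := by
  rw [← hξ.map_eq j] at hφ ⊢
  exact (integral_map (hξ.measurable j).aemeasurable hφ.1).symm

lemma indepFun_comp (hξ : IsGaussianNoise ξ 𝒢 v P) {j : ℕ} {Z : Ω → ℝ} (hZ : Measurable[𝒢 j] Z)
    {φ : ℝ → ℝ} (hφ : Measurable φ) : IndepFun Z (fun ω => φ (ξ j ω)) P := by
  have hindep : IndepFun (ξ j) Z P :=
    (IndepFun_iff_Indep _ _ _).2 (indep_of_indep_of_le_right (hξ.indep j) hZ.comap_le)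
  exact hindep.symm.comp measurable_id hφ

lemma integrable_mul_comp (hξ : IsGaussianNoise ξ 𝒢 v P) {j : ℕ} {Z : Ω → ℝ}
    (hZ : Measurable[𝒢 j] Z) (hZ_int : Integrable Z P) {φ : ℝ → ℝ} (hφ : Measurable φ)
    (hφ_int : Integrable φ (gaussianReal 0 (v j))) : Integrable (fun ω => Z ω * φ (ξ j ω)) P :=
  (hξ.indepFun_comp hZ hφ).integrable_mul hZ_int (hξ.integrable_comp j hφ_int)

lemma integral_mul_comp (hξ : IsGaussianNoise ξ 𝒢 v P) {j : ℕ} {Z : Ω → ℝ}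
    (hZ : Measurable[𝒢 j] Z) {φ : ℝ → ℝ} (hφ : Measurable φ)
    (hφ_int : Integrable φ (gaussianReal 0 (v j))) :
    ∫ ω, Z ω * φ (ξ j ω) ∂P = (∫ ω, Z ω ∂P) * ∫ x, φ x ∂gaussianReal 0 (v j) := by
  rw [← hξ.integral_comp j hφ_int]
  exact (hξ.indepFun_comp hZ hφ).integral_mul_eq_mul_integral
    (hZ.mono (𝒢.le j) le_rfl).aestronglyMeasurable (hφ.comp (hξ.measurable j)).aestronglyMeasurable

end IsGaussianNoise

lemma integrable_id_gaussianReal_zero (v : ℝ≥0) : Integrable (fun x => x) (gaussianReal 0 v) :=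
  (memLp_id_gaussianReal' 1 ENNReal.one_ne_top).integrable le_rfl

lemma integrable_sq_gaussianReal_zero (v : ℝ≥0) : Integrable (fun x => x ^ 2) (gaussianReal 0 v) :=
  (memLp_id_gaussianReal' 2 ENNReal.ofNat_ne_top).integrable_sq

lemma integral_sq_gaussianReal_zero (v : ℝ≥0) : ∫ x, x ^ 2 ∂gaussianReal 0 v = v := by
  have hvar := variance_id_gaussianReal (μ := 0) (v := v)
  rwa [variance_of_integral_eq_zero aemeasurable_id integral_id_gaussianReal] at hvar

section Step

variable {Ω : Type*} {mΩ : MeasurableSpace Ω} {P : Measure Ω} {ξ : ℕ → Ω → ℝ}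
  {𝒢 : Filtration ℕ mΩ} {v : ℕ → ℝ≥0} {M X : Ω → ℝ} {q : ℝ}

lemma integrable_abs_rpow_mul_mul (hq : 2 ≤ q) (hM : AEStronglyMeasurable M P)
    (hX : AEStronglyMeasurable X P) (hM_int : Integrable (fun ω => |M ω| ^ q) P)
    (hX_int : Integrable (fun ω => |X ω| ^ q) P) :
    Integrable (fun ω => |M ω| ^ (q - 2) * M ω * X ω) P := by
  have hholder : Integrable (fun ω => |M ω| ^ (q - 1) * |X ω| ^ (1 : ℝ)) P :=
    integrable_rpow_mul_rpow_of_add_eq (fun ω => abs_nonneg (M ω)) (fun ω => abs_nonneg (X ω))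
      (by linarith) (by linarith) zero_le_one (by ring) hM_int hX_int
  refine hholder.mono (((hM.aemeasurable.abs.pow_const _).mul hM.aemeasurable).mul
    hX.aemeasurable).aestronglyMeasurable (.of_forall fun ω => le_of_eq ?_)
  have hsplit : |M ω| ^ (q - 1) = |M ω| ^ (q - 2) * |M ω| := by
    rw [← Real.rpow_add_one' (abs_nonneg _) (by linarith)]
    ring_nf
  simp only [norm_mul, Real.norm_eq_abs, Real.abs_rpow_of_nonneg (abs_nonneg _), abs_abs,
    Real.rpow_one, hsplit]

lemma integrable_abs_rpow_mul_sq (hq : 2 ≤ q) (hM_int : Integrable (fun ω => |M ω| ^ q) P)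
    (hX_int : Integrable (fun ω => |X ω| ^ q) P) :
    Integrable (fun ω => |M ω| ^ (q - 2) * X ω ^ 2) P := by
  simpa only [Real.rpow_two, sq_abs] using
    integrable_rpow_mul_rpow_of_add_eq (fun ω => abs_nonneg (M ω)) (fun ω => abs_nonneg (X ω))
      (by linarith) (by linarith) zero_le_two (by ring) hM_int hX_int

lemma integral_abs_rpow_mul_sq_le {K B : ℝ} (hK : 0 ≤ K) (hB : 0 ≤ B) (hq : 2 ≤ q)
    (hM_int : Integrable (fun ω => |M ω| ^ q) P) (hX_int : Integrable (fun ω => |X ω| ^ q) P)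
    (hMK : ∫ ω, |M ω| ^ q ∂P ≤ K ^ q) (hXB : ∫ ω, |X ω| ^ q ∂P ≤ B ^ q) :
    ∫ ω, |M ω| ^ (q - 2) * X ω ^ 2 ∂P ≤ K ^ (q - 2) * B ^ 2 := by
  simpa only [Real.rpow_two, sq_abs] using
    integral_rpow_mul_rpow_le_of_integral_le hK hB (fun ω => abs_nonneg (M ω))
      (fun ω => abs_nonneg (X ω)) (by linarith) (by linarith) zero_le_two (by ring)
      hM_int hX_int hMK hXB

lemma IsGaussianNoise.integrable_abs_add_mul_rpow (hξ : IsGaussianNoise ξ 𝒢 v P) (hq : 0 < q)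
    {j : ℕ} (hM : AEStronglyMeasurable M P) (hX : Measurable[𝒢 j] X)
    (hM_int : Integrable (fun ω => |M ω| ^ q) P) (hX_int : Integrable (fun ω => |X ω| ^ q) P) :
    Integrable (fun ω => |M ω + X ω * ξ j ω| ^ q) P := by
  have hpow : Measurable fun x : ℝ => |x| ^ q := measurable_norm.pow_const q
  have hXξ_meas : AEStronglyMeasurable (fun ω => X ω * ξ j ω) P :=
    ((hX.mono (𝒢.le j) le_rfl).mul (hξ.measurable j)).aestronglyMeasurable
  have hXξ : Integrable (fun ω => |X ω * ξ j ω| ^ q) P := by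
    simpa only [abs_mul, Real.mul_rpow (abs_nonneg _) (abs_nonneg _)] using
      hξ.integrable_mul_comp (Z := fun ω => |X ω| ^ q) (hpow.comp hX) hX_int hpow
        (integrable_abs_rpow_gaussianReal hq (v j))
  exact (memLp_ofReal_iff_integrable_abs_rpow hq (hM.add hXξ_meas)).1
    (((memLp_ofReal_iff_integrable_abs_rpow hq hM).2 hM_int).add
      ((memLp_ofReal_iff_integrable_abs_rpow hq hXξ_meas).2 hXξ))

lemma IsGaussianNoise.integral_abs_add_mul_rpow_le (hξ : IsGaussianNoise ξ 𝒢 v P) (hq : 2 ≤ q)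
    {η C : ℝ} (htaylor : ∀ m d : ℝ, |m + d| ^ q ≤ |m| ^ q + q * (|m| ^ (q - 2) * m * d)
      + q * (q - 1) / 2 * ((1 + η) * (|m| ^ (q - 2) * d ^ 2) + (q - 2) * C * |d| ^ q))
    {j : ℕ} (hM : Measurable[𝒢 j] M) (hX : Measurable[𝒢 j] X)
    (hM_int : Integrable (fun ω => |M ω| ^ q) P) (hX_int : Integrable (fun ω => |X ω| ^ q) P) :
    ∫ ω, |M ω + X ω * ξ j ω| ^ q ∂P ≤ ∫ ω, |M ω| ^ q ∂P
      + q * (q - 1) / 2 * ((1 + η) * ((∫ ω, |M ω| ^ (q - 2) * X ω ^ 2 ∂P) * v j)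
        + (q - 2) * C * ((∫ ω, |X ω| ^ q ∂P) * ((v j : ℝ) ^ (q / 2) * gaussianAbsMoment q))) := by
  have hM' : AEStronglyMeasurable M P := (hM.mono (𝒢.le j) le_rfl).aestronglyMeasurable
  have hX' : AEStronglyMeasurable X P := (hX.mono (𝒢.le j) le_rfl).aestronglyMeasurable
  have hpow : Measurable fun x : ℝ => |x| ^ q := measurable_norm.pow_const q
  have hMpow : Measurable[𝒢 j] fun ω => |M ω| ^ (q - 2) := (measurable_norm.pow_const _).comp hM
  have hfirst_meas : Measurable[𝒢 j] fun ω => |M ω| ^ (q - 2) * M ω * X ω := (hMpow.mul hM).mul hX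
  have hsecond_meas : Measurable[𝒢 j] fun ω => |M ω| ^ (q - 2) * X ω ^ 2 :=
    hMpow.mul (hX.pow_const 2)
  have hrest_meas : Measurable[𝒢 j] fun ω => |X ω| ^ q := hpow.comp hX
  have hid := integrable_id_gaussianReal_zero (v j)
  have hsq := integrable_sq_gaussianReal_zero (v j)
  have hpow_int := integrable_abs_rpow_gaussianReal (by linarith : 0 < q) (v j)
  have hsq_meas : Measurable fun x : ℝ => x ^ 2 := measurable_id.pow_const 2
  have hfirst := (hξ.integrable_mul_comp hfirst_meas
    (integrable_abs_rpow_mul_mul hq hM' hX' hM_int hX_int) measurable_id' hid).const_mul q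
  have hsecond := (hξ.integrable_mul_comp hsecond_meas
    (integrable_abs_rpow_mul_sq hq hM_int hX_int) hsq_meas hsq).const_mul (1 + η)
  have hrest := (hξ.integrable_mul_comp hrest_meas hX_int hpow hpow_int).const_mul ((q - 2) * C)
  have hpath (ω : Ω) : |M ω + X ω * ξ j ω| ^ q ≤ |M ω| ^ q
      + q * (|M ω| ^ (q - 2) * M ω * X ω * ξ j ω)
      + q * (q - 1) / 2 * ((1 + η) * (|M ω| ^ (q - 2) * X ω ^ 2 * ξ j ω ^ 2)
        + (q - 2) * C * (|X ω| ^ q * |ξ j ω| ^ q)) := by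
    refine (htaylor (M ω) (X ω * ξ j ω)).trans_eq ?_
    rw [abs_mul, Real.mul_rpow (abs_nonneg _) (abs_nonneg _)]
    ring
  have hmono := integral_mono
    (hξ.integrable_abs_add_mul_rpow (by linarith) hM' hX hM_int hX_int)
    ((hM_int.add hfirst).add ((hsecond.add hrest).const_mul (q * (q - 1) / 2))) hpath
  refine hmono.trans_eq ?_
  rw [integral_add' (hM_int.add hfirst) ((hsecond.add hrest).const_mul (q * (q - 1) / 2)),
    integral_add' hM_int hfirst, integral_const_mul, integral_const_mul,
    integral_add' hsecond hrest, integral_const_mul, integral_const_mul,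
    hξ.integral_mul_comp hfirst_meas measurable_id' hid,
    hξ.integral_mul_comp hsecond_meas hsq_meas hsq,
    hξ.integral_mul_comp hrest_meas hpow hpow_int, integral_abs_rpow_gaussianReal,
    integral_sq_gaussianReal_zero, integral_id_gaussianReal, mul_zero, mul_zero, add_zero]

end Step

lemma exists_add_mul_rpow_le_mul {q L D : ℝ} (hq : 2 ≤ q) (hLD : L < D) (R : ℝ) :
    ∃ δ > 0, ∀ v, 0 ≤ v → v ≤ δ → L * v + (q - 2) * R * v ^ (q / 2) ≤ D * v := by
  rcases hq.eq_or_lt with rfl | hq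
  · exact ⟨1, one_pos, fun v hv _ => by nlinarith⟩
  have hlim : Tendsto (fun v : ℝ => L + (q - 2) * R * v ^ (q / 2 - 1)) (nhds 0) (nhds L) := by
    have hcont : ContinuousAt (fun v : ℝ => L + (q - 2) * R * v ^ (q / 2 - 1)) 0 :=
      continuousAt_const.add (continuousAt_const.mul
        (Real.continuousAt_rpow_const _ _ (.inr (by linarith))))
    simpa [ContinuousAt, Real.zero_rpow (by linarith : q / 2 - 1 ≠ 0)] using hcont
  obtain ⟨δ, hδ, hball⟩ := Metric.eventually_nhds_iff.1 (hlim.eventually_lt_const hLD)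
  refine ⟨δ / 2, half_pos hδ, fun v hv hvδ => ?_⟩
  have hlt := hball (show dist v 0 < δ by rw [dist_zero_right, Real.norm_of_nonneg hv]; linarith)
  have hsplit : v ^ (q / 2) = v ^ (q / 2 - 1) * v := by
    rw [← Real.rpow_add_one' hv (by linarith), sub_add_cancel]
  calc L * v + (q - 2) * R * v ^ (q / 2) = (L + (q - 2) * R * v ^ (q / 2 - 1)) * v := by
        rw [hsplit]; ring
    _ ≤ D * v := by gcongr

lemma mul_rpow_sub_two_mul_sq_lt_div {κ q K B V : ℝ} (hκ : 0 ≤ κ) (hB : 0 ≤ B) (hV : 0 < V)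
    (hK : √(κ * V) * B < K) : κ * (K ^ (q - 2) * B ^ 2) < K ^ q / V := by
  have hK0 : 0 < K := (by positivity : 0 ≤ √(κ * V) * B).trans_lt hK
  have hsq : κ * V * B ^ 2 < K ^ 2 := by
    simpa only [mul_pow, Real.sq_sqrt (by positivity : 0 ≤ κ * V)] using
      pow_lt_pow_left₀ hK (by positivity) two_ne_zero
  have hKq : K ^ q = K ^ (q - 2) * K ^ 2 := by
    rw [← Real.rpow_two, ← Real.rpow_add hK0, sub_add_cancel]
  rw [lt_div_iff₀ hV, hKq]
  calc κ * (K ^ (q - 2) * B ^ 2) * V = K ^ (q - 2) * (κ * V * B ^ 2) := by ring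
    _ < K ^ (q - 2) * K ^ 2 := by gcongr

/-- The stochastic integral `∑ j < k, X j * ξ j` of `X` against the increments `ξ`. -/
def discreteIntegral {Ω : Type*} (X ξ : ℕ → Ω → ℝ) (k : ℕ) (ω : Ω) : ℝ :=
  ∑ j ∈ Finset.range k, X j ω * ξ j ω

section DiscreteIntegral

variable {Ω : Type*} {mΩ : MeasurableSpace Ω} {P : Measure Ω} {q : ℝ}

lemma discreteIntegral_zero (X ξ : ℕ → Ω → ℝ) : discreteIntegral X ξ 0 = 0 := by
  ext
  simp [discreteIntegral]

lemma discreteIntegral_succ (X ξ : ℕ → Ω → ℝ) (k : ℕ) :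
    discreteIntegral X ξ (k + 1) = fun ω => discreteIntegral X ξ k ω + X k ω * ξ k ω := by
  ext
  simp [discreteIntegral, Finset.sum_range_succ]

lemma exists_integral_abs_add_mul_rpow_le (P : Measure Ω) {K B D : ℝ} (hq : 2 ≤ q) (hK : 0 ≤ K)
    (hB : 0 ≤ B) (hD : q * (q - 1) / 2 * (K ^ (q - 2) * B ^ 2) < D) :
    ∃ δ > (0 : ℝ), ∀ {ξ : ℕ → Ω → ℝ} {𝒢 : Filtration ℕ mΩ} {v : ℕ → ℝ≥0}, IsGaussianNoise ξ 𝒢 v P →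
      ∀ {j : ℕ} {M X : Ω → ℝ}, Measurable[𝒢 j] M → Measurable[𝒢 j] X →
        Integrable (fun ω => |M ω| ^ q) P → Integrable (fun ω => |X ω| ^ q) P →
        ∫ ω, |M ω| ^ q ∂P ≤ K ^ q → ∫ ω, |X ω| ^ q ∂P ≤ B ^ q → (v j : ℝ) ≤ δ →
        ∫ ω, |M ω + X ω * ξ j ω| ^ q ∂P ≤ ∫ ω, |M ω| ^ q ∂P + D * v j := by
  have hlim : Tendsto (fun η : ℝ => q * (q - 1) / 2 * ((1 + η) * (K ^ (q - 2) * B ^ 2)))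
      (nhdsWithin 0 (Ioi 0)) (nhds (q * (q - 1) / 2 * (K ^ (q - 2) * B ^ 2))) :=
    tendsto_nhdsWithin_of_tendsto_nhds (Continuous.tendsto' (by fun_prop) _ _ (by ring))
  obtain ⟨η, hηD, hη⟩ := ((hlim.eventually_lt_const hD).and self_mem_nhdsWithin).exists
  obtain ⟨C, hC, htaylor⟩ := exists_abs_add_rpow_le hq hη
  obtain ⟨δ, hδ, hstep⟩ := exists_add_mul_rpow_le_mul hq hηD
    (q * (q - 1) / 2 * C * (B ^ q * gaussianAbsMoment q))
  refine ⟨δ, hδ, fun {ξ 𝒢 v} hξ {j M X} hM hX hM_int hX_int hMK hXB hv => ?_⟩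
  have hκ : 0 ≤ q * (q - 1) / 2 := by nlinarith
  have hmixed := integral_abs_rpow_mul_sq_le hK hB hq hM_int hX_int hMK hXB
  have hγ := gaussianAbsMoment_nonneg q
  have : 0 ≤ q - 2 := by linarith
  calc ∫ ω, |M ω + X ω * ξ j ω| ^ q ∂P
      ≤ ∫ ω, |M ω| ^ q ∂P + q * (q - 1) / 2 *
        ((1 + η) * ((∫ ω, |M ω| ^ (q - 2) * X ω ^ 2 ∂P) * v j)
          + (q - 2) * C * ((∫ ω, |X ω| ^ q ∂P) * ((v j : ℝ) ^ (q / 2) * gaussianAbsMoment q))) :=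
        hξ.integral_abs_add_mul_rpow_le hq htaylor hM hX hM_int hX_int
    _ ≤ ∫ ω, |M ω| ^ q ∂P + q * (q - 1) / 2 * ((1 + η) * (K ^ (q - 2) * B ^ 2 * v j)
          + (q - 2) * C * (B ^ q * ((v j : ℝ) ^ (q / 2) * gaussianAbsMoment q))) := by gcongr
    _ = ∫ ω, |M ω| ^ q ∂P + (q * (q - 1) / 2 * ((1 + η) * (K ^ (q - 2) * B ^ 2)) * v j
          + (q - 2) * (q * (q - 1) / 2 * C * (B ^ q * gaussianAbsMoment q))
            * (v j : ℝ) ^ (q / 2)) := by ring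
    _ ≤ ∫ ω, |M ω| ^ q ∂P + D * v j := by gcongr; exact hstep _ (v j).coe_nonneg hv

namespace IsGaussianNoise

variable {ξ X : ℕ → Ω → ℝ} {𝒢 : Filtration ℕ mΩ} {v : ℕ → ℝ≥0}

lemma measurable_discreteIntegral (hξ : IsGaussianNoise ξ 𝒢 v P) (hX : ∀ j, Measurable[𝒢 j] (X j))
    (k : ℕ) : Measurable[𝒢 k] (discreteIntegral X ξ k) := by
  refine Finset.measurable_sum _ fun j hj => ?_
  have hjk : j + 1 ≤ k := Finset.mem_range.1 hj
  exact ((hX j).mono (𝒢.mono (by omega)) le_rfl).mul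
    ((hξ.measurable_succ j).mono (𝒢.mono hjk) le_rfl)

lemma integrable_abs_discreteIntegral_rpow (hξ : IsGaussianNoise ξ 𝒢 v P) (hq : 0 < q)
    (hX : ∀ j, Measurable[𝒢 j] (X j)) (hX_int : ∀ j, Integrable (fun ω => |X j ω| ^ q) P) (k : ℕ) :
    Integrable (fun ω => |discreteIntegral X ξ k ω| ^ q) P := by
  induction k with
  | zero => simp [discreteIntegral_zero, Real.zero_rpow hq.ne']
  | succ k ih =>
    simp only [discreteIntegral_succ]
    exact hξ.integrable_abs_add_mul_rpow hq
      ((hξ.measurable_discreteIntegral hX k).mono (𝒢.le k) le_rfl).aestronglyMeasurable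
      (hX k) ih (hX_int k)

lemma martingale_discreteIntegral [IsFiniteMeasure P] (hξ : IsGaussianNoise ξ 𝒢 v P)
    (hX : ∀ j, Measurable[𝒢 j] (X j)) (hX_int : ∀ j, Integrable (X j) P) :
    Martingale (discreteIntegral X ξ) 𝒢 P := by
  have hterm (j : ℕ) : Integrable (X j * ξ j) P :=
    hξ.integrable_mul_comp (hX j) (hX_int j) measurable_id' (integrable_id_gaussianReal_zero _)
  have hint (k : ℕ) : Integrable (discreteIntegral X ξ k) P :=
    integrable_finsetSum _ fun j _ => hterm j
  have hmeas (k : ℕ) : StronglyMeasurable[𝒢 k] (discreteIntegral X ξ k) :=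
    (hξ.measurable_discreteIntegral hX k).stronglyMeasurable
  refine martingale_nat hmeas hint fun k => ?_
  have hξ_int : Integrable (ξ k) P := hξ.integrable_comp k (integrable_id_gaussianReal_zero _)
  have hmean : ∫ ω, ξ k ω ∂P = 0 :=
    (hξ.integral_comp k (integrable_id_gaussianReal_zero _)).trans integral_id_gaussianReal
  have hincr : P[X k * ξ k | 𝒢 k] =ᵐ[P] 0 := by
    have hpull := condExp_mul_of_stronglyMeasurable_left (hX k).stronglyMeasurable (hterm k) hξ_int
    have hindep := condExp_indep_eq (hξ.measurable k).comap_le (𝒢.le k)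
      (comap_measurable (ξ k)).stronglyMeasurable (hξ.indep k)
    filter_upwards [hpull, hindep] with ω hpull hindep
    simp [hpull, hindep, hmean]
  have hsum : discreteIntegral X ξ (k + 1) = discreteIntegral X ξ k + X k * ξ k :=
    discreteIntegral_succ X ξ k
  rw [hsum]
  filter_upwards [condExp_add (hint k) (hterm k) (𝒢 k), hincr] with ω hadd hincr
  have hfix := condExp_of_stronglyMeasurable (𝒢.le k) (hmeas k) (hint k)
  exact (hadd.trans (by simp [hfix, hincr])).symm

end IsGaussianNoise

lemma exists_integral_abs_discreteIntegral_rpow_le (P : Measure Ω) {K B V : ℝ} (hq : 2 ≤ q)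
    (hB : 0 ≤ B) (hV : 0 < V) (hK : √(q * (q - 1) / 2 * V) * B < K) :
    ∃ δ > (0 : ℝ), ∀ {ξ X : ℕ → Ω → ℝ} {𝒢 : Filtration ℕ mΩ} {v : ℕ → ℝ≥0} {n : ℕ},
      IsGaussianNoise ξ 𝒢 v P → (∀ j, Measurable[𝒢 j] (X j)) →
      (∀ j, Integrable (fun ω => |X j ω| ^ q) P) → (∀ j, ∫ ω, |X j ω| ^ q ∂P ≤ B ^ q) →
      (∀ j, (v j : ℝ) ≤ δ) → ∑ j ∈ Finset.range n, (v j : ℝ) ≤ V →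
      ∫ ω, |discreteIntegral X ξ n ω| ^ q ∂P ≤ K ^ q := by
  have hκ : 0 ≤ q * (q - 1) / 2 := by nlinarith
  have hK0 : 0 ≤ K := (by positivity : 0 ≤ √(q * (q - 1) / 2 * V) * B).trans hK.le
  obtain ⟨δ, hδ, hstep⟩ := exists_integral_abs_add_mul_rpow_le P hq hK0 hB
    (mul_rpow_sub_two_mul_sq_lt_div hκ hB hV hK)
  refine ⟨δ, hδ, fun {ξ X 𝒢 v n} hξ hX hX_int hXB hv hvV => ?_⟩
  have hle {k : ℕ} (hk : k ≤ n) :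
      K ^ q / V * ∑ j ∈ Finset.range k, (v j : ℝ) ≤ K ^ q := by
    have hsum : ∑ j ∈ Finset.range k, (v j : ℝ) ≤ V :=
      (Finset.sum_le_sum_of_subset_of_nonneg (Finset.range_mono hk)
        fun j _ _ => (v j).coe_nonneg).trans hvV
    calc K ^ q / V * ∑ j ∈ Finset.range k, (v j : ℝ) ≤ K ^ q / V * V := by gcongr
      _ = K ^ q := div_mul_cancel₀ _ hV.ne'
  suffices hind : ∀ k ≤ n, ∫ ω, |discreteIntegral X ξ k ω| ^ q ∂P
      ≤ K ^ q / V * ∑ j ∈ Finset.range k, (v j : ℝ) from (hind n le_rfl).trans (hle le_rfl)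
  intro k
  induction k with
  | zero => simp [discreteIntegral_zero, Real.zero_rpow (by linarith : q ≠ 0)]
  | succ k ih =>
    intro hk
    have hbound := ih (by omega)
    have hnext := hstep hξ (hξ.measurable_discreteIntegral hX k) (hX k)
      (hξ.integrable_abs_discreteIntegral_rpow (by linarith) hX hX_int k) (hX_int k)
      (hbound.trans (hle (by omega))) (hXB k) (hv k)
    simp only [discreteIntegral_succ, Finset.sum_range_succ, mul_add]
    exact hnext.trans (by gcongr)

end DiscreteIntegral

namespace IsGaussianNoise

variable {Ω : Type*} {mΩ : MeasurableSpace Ω} {P : Measure Ω} {ξ : ℕ → Ω → ℝ}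
  {𝒢 : Filtration ℕ mΩ} {v : ℕ → ℝ≥0}

lemma pairwise_indepFun_sq (hξ : IsGaussianNoise ξ 𝒢 v P) :
    Pairwise fun i j => IndepFun (fun ω => ξ i ω ^ 2) (fun ω => ξ j ω ^ 2) P := by
  have hlt {i j : ℕ} (hij : i < j) : IndepFun (fun ω => ξ i ω ^ 2) (fun ω => ξ j ω ^ 2) P :=
    hξ.indepFun_comp
      (((hξ.measurable_succ i).mono (𝒢.mono (show i + 1 ≤ j from hij)) le_rfl).pow_const 2)
      (measurable_id.pow_const 2)
  intro i j hij
  rcases hij.lt_or_gt with h | h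
  exacts [hlt h, (hlt h).symm]

lemma memLp_sq (hξ : IsGaussianNoise ξ 𝒢 v P) (j : ℕ) : MemLp (fun ω => ξ j ω ^ 2) 2 P := by
  refine (memLp_two_iff_integrable_sq ((hξ.measurable j).pow_const 2).aestronglyMeasurable).2 ?_
  have hfour := hξ.integrable_comp j (integrable_abs_rpow_gaussianReal four_pos (v j))
  simpa only [Real.rpow_ofNat, ← pow_mul, Even.pow_abs (by decide : Even 4)] using hfour

lemma integral_sq (hξ : IsGaussianNoise ξ 𝒢 v P) (j : ℕ) : ∫ ω, ξ j ω ^ 2 ∂P = v j :=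
  (hξ.integral_comp j (integrable_sq_gaussianReal_zero _)).trans (integral_sq_gaussianReal_zero _)

lemma variance_sq_le [IsProbabilityMeasure P] (hξ : IsGaussianNoise ξ 𝒢 v P) (j : ℕ) :
    Var[fun ω => ξ j ω ^ 2; P] ≤ (v j : ℝ) ^ 2 * gaussianAbsMoment 4 := by
  refine (variance_le_expectation_sq (hξ.memLp_sq j).1).trans_eq ?_
  have hfour := (hξ.integral_comp j (integrable_abs_rpow_gaussianReal four_pos (v j))).trans
    (integral_abs_rpow_gaussianReal 4 (v j))
  rw [show (4 : ℝ) / 2 = 2 by norm_num, Real.rpow_two] at hfour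
  rw [← hfour]
  simp only [Pi.pow_apply, ← pow_mul, Real.rpow_ofNat, Even.pow_abs (by decide : Even 4)]

lemma measure_le_abs_sum_sq_sub_le [IsProbabilityMeasure P] (hξ : IsGaussianNoise ξ 𝒢 v P)
    (n : ℕ) {ε : ℝ} (hε : 0 < ε) :
    P {ω | ε ≤ |∑ j ∈ Finset.range n, ξ j ω ^ 2 - ∑ j ∈ Finset.range n, (v j : ℝ)|} ≤
      ENNReal.ofReal ((∑ j ∈ Finset.range n, (v j : ℝ) ^ 2) * gaussianAbsMoment 4 / ε ^ 2) := by
  have hmean : ∫ ω, (∑ j ∈ Finset.range n, fun ω => ξ j ω ^ 2) ω ∂P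
      = ∑ j ∈ Finset.range n, (v j : ℝ) := by
    simp only [Finset.sum_apply]
    rw [integral_finsetSum _ fun j _ => (hξ.memLp_sq j).integrable one_le_two]
    exact Finset.sum_congr rfl fun j _ => hξ.integral_sq j
  have hvar : Var[∑ j ∈ Finset.range n, fun ω => ξ j ω ^ 2; P]
      ≤ (∑ j ∈ Finset.range n, (v j : ℝ) ^ 2) * gaussianAbsMoment 4 := by
    rw [IndepFun.variance_sum (fun j _ => hξ.memLp_sq j) (hξ.pairwise_indepFun_sq.set_pairwise _),
      Finset.sum_mul]
    exact Finset.sum_le_sum fun j _ => hξ.variance_sq_le j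
  have hcheb := meas_ge_le_variance_div_sq
    (memLp_finsetSum' (Finset.range n) fun j _ => hξ.memLp_sq j) hε
  rw [hmean] at hcheb
  simp only [Finset.sum_apply] at hcheb
  exact hcheb.trans (ENNReal.ofReal_le_ofReal (by gcongr))

end IsGaussianNoise

section Pathwise

variable {x w b : ℝ → ℝ} {c T δ : ℝ}

lemma mul_integral_le_of_mul_le {s t : ℝ} (hst : s ≤ t) (hc : 0 ≤ c)
    (hb : IntervalIntegrable b volume s t) (hx : ∀ u ∈ Icc s t, |x u - x s| ≤ δ)
    (hx_sq : ∀ u ∈ Icc s t, |x u ^ 2 - x s ^ 2| ≤ δ)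
    (hdrift : ∀ u ∈ Icc s t, x u * b u ≤ c * (1 + x u ^ 2)) :
    x s * ∫ u in s..t, b u
      ≤ c * ((t - s) * (1 + x s ^ 2 + δ)) + δ * ∫ u in s..t, |b u| := by
  have hconst : IntervalIntegrable (fun _ => c * (1 + x s ^ 2 + δ)) volume s t :=
    intervalIntegrable_const
  have hpoint (u : ℝ) (hu : u ∈ Icc s t) :
      x s * b u ≤ c * (1 + x s ^ 2 + δ) + δ * |b u| := by
    have hfreeze : (x s - x u) * b u ≤ δ * |b u| := by
      refine (le_abs_self _).trans ?_
      rw [abs_mul, abs_sub_comm]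
      exact mul_le_mul_of_nonneg_right (hx u hu) (abs_nonneg _)
    have hgrowth : c * (1 + x u ^ 2) ≤ c * (1 + x s ^ 2 + δ) :=
      mul_le_mul_of_nonneg_left (by linarith [(abs_le.1 (hx_sq u hu)).2]) hc
    linarith [hdrift u hu]
  calc x s * ∫ u in s..t, b u = ∫ u in s..t, x s * b u := by
        rw [intervalIntegral.integral_const_mul]
    _ ≤ ∫ u in s..t, (c * (1 + x s ^ 2 + δ) + δ * |b u|) :=
        intervalIntegral.integral_mono_on hst (hb.const_mul _)
          (hconst.add (hb.abs.const_mul δ)) hpoint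
    _ = c * ((t - s) * (1 + x s ^ 2 + δ)) + δ * ∫ u in s..t, |b u| := by
        rw [intervalIntegral.integral_add hconst (hb.abs.const_mul δ),
          intervalIntegral.integral_const, intervalIntegral.integral_const_mul, smul_eq_mul]
        ring

lemma sq_le_of_sub_eq_integral_add {s t : ℝ} (hst : s ≤ t) (hc : 0 ≤ c)
    (hb : IntervalIntegrable b volume s t) (hsde : x t - x s = (∫ u in s..t, b u) + (w t - w s))
    (hx : ∀ u ∈ Icc s t, |x u - x s| ≤ δ) (hx_sq : ∀ u ∈ Icc s t, |x u ^ 2 - x s ^ 2| ≤ δ)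
    (hw : |w t - w s| ≤ δ) (hdrift : ∀ u ∈ Icc s t, x u * b u ≤ c * (1 + x u ^ 2)) :
    x t ^ 2 ≤ x s ^ 2 + 2 * c * ((t - s) * (1 + x s ^ 2 + δ)) + 2 * (x s * (w t - w s))
      + (w t - w s) ^ 2 + 4 * δ * ∫ u in s..t, |b u| := by
  set a := ∫ u in s..t, b u
  have hdrift_int := mul_integral_le_of_mul_le hst hc hb hx hx_sq hdrift
  have hcross : a * ((x t - x s) + (w t - w s)) ≤ (∫ u in s..t, |b u|) * (2 * δ) := by
    refine (le_abs_self _).trans ?_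
    rw [abs_mul]
    have ha_le : |a| ≤ ∫ u in s..t, |b u| := intervalIntegral.abs_integral_le_integral_abs hst
    exact mul_le_mul ha_le ((abs_add_le _ _).trans (by linarith [hx t (right_mem_Icc.2 hst)]))
      (abs_nonneg _) ((abs_nonneg _).trans ha_le)
  have hsquare : x t ^ 2 = x s ^ 2 + 2 * (x s * a) + 2 * (x s * (w t - w s)) + (w t - w s) ^ 2
      + a * ((x t - x s) + (w t - w s)) := by
    rw [eq_sub_of_add_eq hsde.symm]
    ring
  linarith

lemma sq_le_sum_of_sub_eq_integral_add {τ : ℕ → ℝ} (hτ : Monotone τ) (hc : 0 ≤ c)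
    (hb : ∀ j, IntervalIntegrable b volume (τ j) (τ (j + 1)))
    (hsde : ∀ j, x (τ (j + 1)) - x (τ j)
      = (∫ u in τ j..τ (j + 1), b u) + (w (τ (j + 1)) - w (τ j)))
    (hx : ∀ j, ∀ u ∈ Icc (τ j) (τ (j + 1)), |x u - x (τ j)| ≤ δ)
    (hx_sq : ∀ j, ∀ u ∈ Icc (τ j) (τ (j + 1)), |x u ^ 2 - x (τ j) ^ 2| ≤ δ)
    (hw : ∀ j, |w (τ (j + 1)) - w (τ j)| ≤ δ)
    (hdrift : ∀ j, ∀ u ∈ Icc (τ j) (τ (j + 1)), x u * b u ≤ c * (1 + x u ^ 2)) (k : ℕ) :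
    x (τ k) ^ 2 ≤ x (τ 0) ^ 2
      + 2 * c * ∑ j ∈ Finset.range k, (τ (j + 1) - τ j) * (1 + x (τ j) ^ 2 + δ)
      + 2 * ∑ j ∈ Finset.range k, x (τ j) * (w (τ (j + 1)) - w (τ j))
      + ∑ j ∈ Finset.range k, (w (τ (j + 1)) - w (τ j)) ^ 2
      + 4 * δ * ∫ u in τ 0..τ k, |b u| := by
  rw [← intervalIntegral.sum_integral_adjacent_intervals fun j _ => (hb j).abs]
  induction k with
  | zero => simp
  | succ k ih =>
    have hstep := sq_le_of_sub_eq_integral_add (hτ (Nat.le_succ k)) hc (hb k) (hsde k) (hx k)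
      (hx_sq k) (hw k) (hdrift k)
    simp only [Finset.sum_range_succ]
    linarith

lemma exists_mem_Icc_of_monotone {τ : ℕ → ℝ} (hτ : Monotone τ) {n : ℕ} {t : ℝ}
    (ht : t ∈ Icc (τ 0) (τ n)) : ∃ k ≤ n, t ∈ Icc (τ k) (τ (k + 1)) := by
  rcases ht.1.eq_or_lt with rfl | h0
  · exact ⟨0, n.zero_le, left_mem_Icc.2 (hτ zero_le_one)⟩
  · have hmem : t ∈ ⋃ i ∈ Ico 0 n, Ioc (τ i) (τ (i + 1)) := by
      simpa only [Nat.succ_eq_succ, Nat.succ_eq_add_one] using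
        (hτ.biUnion_Ico_Ioc_map_succ 0 n).symm ▸ (⟨h0, ht.2⟩ : t ∈ Ioc (τ 0) (τ n))
    simp only [mem_iUnion] at hmem
    obtain ⟨k, hk, hmem⟩ := hmem
    exact ⟨k, hk.2.le, Ioc_subset_Icc_self hmem⟩

lemma exists_forall_dist_le_of_continuousOn_Icc {f : ℝ → ℝ} {a b δ : ℝ}
    (hf : ContinuousOn f (Icc a b)) (hδ : 0 < δ) :
    ∃ r > 0, ∀ s ∈ Icc a b, ∀ t ∈ Icc a b, |s - t| ≤ r → |f s - f t| ≤ δ :=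
  Metric.uniformContinuousOn_iff_le.1 (isCompact_Icc.uniformContinuousOn_of_continuous hf) δ hδ

end Pathwise

/-- `τ 0 ≤ τ 1 ≤ ⋯ ≤ τ n` is a partition of `[0, T]`, extended to all indices by the value `T`. -/
structure IsPartition (τ : ℕ → ℝ) (T : ℝ) (n : ℕ) : Prop where
  monotone : Monotone τ
  zero : τ 0 = 0
  eq_of_le (j : ℕ) (hj : n ≤ j) : τ j = T

namespace IsPartition

variable {τ : ℕ → ℝ} {T : ℝ} {n : ℕ}

lemma mem_Icc (hτ : IsPartition τ T n) (j : ℕ) : τ j ∈ Icc 0 T :=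
  ⟨hτ.zero ▸ hτ.monotone j.zero_le,
    hτ.eq_of_le _ (le_max_right j n) ▸ hτ.monotone (le_max_left j n)⟩

lemma Icc_subset (hτ : IsPartition τ T n) (i j : ℕ) : Icc (τ i) (τ j) ⊆ Icc 0 T :=
  Set.Icc_subset_Icc (hτ.mem_Icc i).1 (hτ.mem_Icc j).2

lemma uIcc_subset (hτ : IsPartition τ T n) (i j : ℕ) : uIcc (τ i) (τ j) ⊆ uIcc 0 T :=
  (uIcc_of_le ((hτ.mem_Icc 0).1.trans (hτ.mem_Icc 0).2)).symm ▸
    uIcc_subset_Icc (hτ.mem_Icc i) (hτ.mem_Icc j)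

lemma sub_nonneg (hτ : IsPartition τ T n) (j : ℕ) : 0 ≤ τ (j + 1) - τ j :=
  _root_.sub_nonneg.2 (hτ.monotone j.le_succ)

lemma sum_sub (hτ : IsPartition τ T n) : ∑ j ∈ Finset.range n, (τ (j + 1) - τ j) = T := by
  rw [Finset.sum_range_sub, hτ.zero, hτ.eq_of_le n le_rfl, sub_zero]

lemma sum_mul_one_add_le (hτ : IsPartition τ T n) {a : ℕ → ℝ} (ha : 0 ≤ a) {k : ℕ} (hk : k ≤ n)
    {δ : ℝ} (hδ : 0 ≤ δ) :
    ∑ j ∈ Finset.range k, (τ (j + 1) - τ j) * (1 + a j + δ)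
      ≤ T + ∑ j ∈ Finset.range n, (τ (j + 1) - τ j) * a j + δ * T := by
  calc ∑ j ∈ Finset.range k, (τ (j + 1) - τ j) * (1 + a j + δ)
      ≤ ∑ j ∈ Finset.range n, (τ (j + 1) - τ j) * (1 + a j + δ) :=
        Finset.sum_le_sum_of_subset_of_nonneg (Finset.range_mono hk) fun j _ _ =>
          mul_nonneg (hτ.sub_nonneg j) (add_nonneg (add_nonneg zero_le_one (ha j)) hδ)
    _ = T + ∑ j ∈ Finset.range n, (τ (j + 1) - τ j) * a j + δ * T := by
        simp only [mul_add, mul_one, Finset.sum_add_distrib, ← Finset.sum_mul, hτ.sum_sub]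
        ring

lemma sum_sq_sub_le (hτ : IsPartition τ T n) {r : ℝ} (hr : ∀ j, τ (j + 1) - τ j ≤ r) :
    ∑ j ∈ Finset.range n, (τ (j + 1) - τ j) ^ 2 ≤ r * T := by
  rw [← hτ.sum_sub, Finset.mul_sum]
  refine Finset.sum_le_sum fun j _ => ?_
  rw [sq]
  exact mul_le_mul_of_nonneg_right (hr j) (hτ.sub_nonneg j)

end IsPartition

section Pathwise

variable {x w b : ℝ → ℝ} {c T : ℝ} {τ : ℕ → ℝ} {n : ℕ}

lemma IsPartition.exists_sq_le (hτ : IsPartition τ T n) (hc : 0 ≤ c)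
    (hb : IntervalIntegrable b volume 0 T)
    (hsde : ∀ j, x (τ (j + 1)) - x (τ j)
      = (∫ u in τ j..τ (j + 1), b u) + (w (τ (j + 1)) - w (τ j)))
    (hdrift : ∀ s ∈ Icc 0 T, x s * b s ≤ c * (1 + x s ^ 2)) {δ : ℝ} (hδ : 0 ≤ δ)
    (hx : ∀ j, ∀ u ∈ Icc (τ j) (τ (j + 1)), |x u - x (τ j)| ≤ δ)
    (hx_sq : ∀ j, ∀ u ∈ Icc (τ j) (τ (j + 1)), |x u ^ 2 - x (τ j) ^ 2| ≤ δ)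
    (hw : ∀ j, |w (τ (j + 1)) - w (τ j)| ≤ δ) {t : ℝ} (ht : t ∈ Icc 0 T) :
    ∃ k ≤ n, x t ^ 2 ≤ x 0 ^ 2
      + 2 * c * (T + ∑ j ∈ Finset.range n, (τ (j + 1) - τ j) * x (τ j) ^ 2)
      + 2 * ∑ j ∈ Finset.range k, x (τ j) * (w (τ (j + 1)) - w (τ j))
      + ∑ j ∈ Finset.range n, (w (τ (j + 1)) - w (τ j)) ^ 2
      + δ * (2 * c * T + 4 * (∫ s in (0 : ℝ)..T, |b s|) + 1) := by
  obtain ⟨k, hk, htk⟩ := exists_mem_Icc_of_monotone hτ.monotone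
    (hτ.zero.symm ▸ (hτ.eq_of_le n le_rfl).symm ▸ ht : t ∈ Icc (τ 0) (τ n))
  have hτk := sq_le_sum_of_sub_eq_integral_add hτ.monotone hc
    (fun j => hb.mono_set (hτ.uIcc_subset j (j + 1))) hsde hx hx_sq hw
    (fun j u hu => hdrift u (hτ.Icc_subset j (j + 1) hu)) k
  have hnear : x t ^ 2 ≤ x (τ k) ^ 2 + δ := by linarith [(abs_le.1 (hx_sq k t htk)).2]
  have hdrift_sum := mul_le_mul_of_nonneg_left
    (hτ.sum_mul_one_add_le (a := fun j => x (τ j) ^ 2) (fun j => sq_nonneg _) hk hδ)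
    (by positivity : 0 ≤ 2 * c)
  have hquad : ∑ j ∈ Finset.range k, (w (τ (j + 1)) - w (τ j)) ^ 2
      ≤ ∑ j ∈ Finset.range n, (w (τ (j + 1)) - w (τ j)) ^ 2 :=
    Finset.sum_le_sum_of_subset_of_nonneg (Finset.range_mono hk) fun _ _ _ => sq_nonneg _
  have hrem : 4 * δ * ∫ u in τ 0..τ k, |b u| ≤ 4 * δ * ∫ s in (0 : ℝ)..T, |b s| := by
    rw [hτ.zero]
    exact mul_le_mul_of_nonneg_left (intervalIntegral.integral_mono_interval le_rfl
      (hτ.mem_Icc k).1 (hτ.mem_Icc k).2 (.of_forall fun s => abs_nonneg (b s)) hb.abs)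
      (by positivity)
  rw [hτ.zero] at hτk hrem
  exact ⟨k, hk, by linarith⟩

lemma exists_mesh_forall_sq_le (hc : 0 ≤ c) (hT : 0 ≤ T)
    (hx : ContinuousOn x (Icc 0 T)) (hw : ContinuousOn w (Icc 0 T))
    (hb : IntervalIntegrable b volume 0 T)
    (hsde : ∀ t ∈ Icc 0 T, x t = x 0 + (∫ s in (0 : ℝ)..t, b s) + w t)
    (hdrift : ∀ s ∈ Icc 0 T, x s * b s ≤ c * (1 + x s ^ 2)) {ε : ℝ} (hε : 0 < ε) :
    ∃ r > 0, ∀ {τ : ℕ → ℝ} {n : ℕ}, IsPartition τ T n → (∀ j, τ (j + 1) - τ j ≤ r) →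
      ∀ t ∈ Icc 0 T, ∃ k ≤ n, x t ^ 2 ≤ x 0 ^ 2
        + 2 * c * (T + ∑ j ∈ Finset.range n, (τ (j + 1) - τ j) * x (τ j) ^ 2)
        + 2 * ∑ j ∈ Finset.range k, x (τ j) * (w (τ (j + 1)) - w (τ j))
        + ∑ j ∈ Finset.range n, (w (τ (j + 1)) - w (τ j)) ^ 2 + ε := by
  obtain ⟨δ, hδ, hδε⟩ : ∃ δ > 0, δ * (2 * c * T + 4 * (∫ s in (0 : ℝ)..T, |b s|) + 1) ≤ ε := by
    have hL : 0 ≤ ∫ s in (0 : ℝ)..T, |b s| :=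
      intervalIntegral.integral_nonneg hT fun _ _ => abs_nonneg _
    exact ⟨ε / (2 * c * T + 4 * (∫ s in (0 : ℝ)..T, |b s|) + 1), by positivity,
      (div_mul_cancel₀ _ (by positivity)).le⟩
  have hx_sq_cont : ContinuousOn (fun t => x t ^ 2) (Icc 0 T) := hx.pow 2
  obtain ⟨rX, hrX, hx_mod⟩ := exists_forall_dist_le_of_continuousOn_Icc hx hδ
  obtain ⟨rSq, hrSq, hx_sq_mod⟩ := exists_forall_dist_le_of_continuousOn_Icc hx_sq_cont hδ
  obtain ⟨rW, hrW, hw_mod⟩ := exists_forall_dist_le_of_continuousOn_Icc hw hδ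
  refine ⟨min rX (min rSq rW), by positivity, fun {τ n} hτ hmesh t ht => ?_⟩
  simp only [le_min_iff] at hmesh
  have hcell (j : ℕ) (u : ℝ) (hu : u ∈ Icc (τ j) (τ (j + 1))) :
      u ∈ Icc 0 T ∧ |u - τ j| ≤ τ (j + 1) - τ j := by
    refine ⟨hτ.Icc_subset j (j + 1) hu, ?_⟩
    rw [abs_of_nonneg (sub_nonneg.2 hu.1)]
    linarith [hu.2]
  have hsde_cell (j : ℕ) : x (τ (j + 1)) - x (τ j)
      = (∫ u in τ j..τ (j + 1), b u) + (w (τ (j + 1)) - w (τ j)) := by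
    have hint (i : ℕ) : IntervalIntegrable b volume 0 (τ i) :=
      hb.mono_set (hτ.zero ▸ hτ.uIcc_subset 0 i)
    rw [hsde _ (hτ.mem_Icc j), hsde _ (hτ.mem_Icc (j + 1)),
      ← intervalIntegral.integral_interval_sub_left (hint (j + 1)) (hint j)]
    ring
  obtain ⟨k, hk, hle⟩ := hτ.exists_sq_le hc hb hsde_cell hdrift hδ.le
    (fun j u hu => hx_mod _ (hcell j u hu).1 _ (hτ.mem_Icc j) ((hcell j u hu).2.trans (hmesh j).1))
    (fun j u hu => hx_sq_mod _ (hcell j u hu).1 _ (hτ.mem_Icc j)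
      ((hcell j u hu).2.trans (hmesh j).2.1))
    (fun j => hw_mod _ (hτ.mem_Icc (j + 1)) _ (hτ.mem_Icc j)
      ((hcell j _ (right_mem_Icc.2 (hτ.monotone j.le_succ))).2.trans (hmesh j).2.2)) ht
  exact ⟨k, hk, hle.trans (by gcongr)⟩

end Pathwise

section LpNorm

variable {Ω : Type*} {mΩ : MeasurableSpace Ω} {P : Measure Ω} {f : Ω → ℝ} {q : ℝ}

lemma eLpNorm_ofReal_le_ofReal_iff {R : ℝ} (hq : 0 < q) (hR : 0 ≤ R)
    (hf : AEStronglyMeasurable f P) :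
    eLpNorm f (ENNReal.ofReal q) P ≤ ENNReal.ofReal R
      ↔ Integrable (fun ω => |f ω| ^ q) P ∧ ∫ ω, |f ω| ^ q ∂P ≤ R ^ q := by
  rw [← memLp_ofReal_iff_integrable_abs_rpow hq hf]
  have hiff (hmem : MemLp f (ENNReal.ofReal q) P) :
      eLpNorm f (ENNReal.ofReal q) P ≤ ENNReal.ofReal R ↔ ∫ ω, |f ω| ^ q ∂P ≤ R ^ q := by
    rw [hmem.eLpNorm_eq_integral_rpow_norm (ENNReal.ofReal_pos.2 hq).ne' ENNReal.ofReal_ne_top,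
      ENNReal.toReal_ofReal hq.le, ENNReal.ofReal_le_ofReal_iff hR]
    exact Real.rpow_inv_le_iff_of_pos (integral_nonneg fun _ => by positivity) hR hq
  refine ⟨fun h => ?_, fun h => (hiff h.1).2 h.2⟩
  have hmem : MemLp f (ENNReal.ofReal q) P := ⟨hf, h.trans_lt ENNReal.ofReal_lt_top⟩
  exact ⟨hmem, (hiff hmem).1 h⟩

lemma eLpNorm_sq (f : Ω → ℝ) (hq : 0 ≤ q) :
    eLpNorm (fun ω => f ω ^ 2) (ENNReal.ofReal q) P = eLpNorm f (ENNReal.ofReal (2 * q)) P ^ 2 := by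
  have hpow := eLpNorm_norm_rpow (μ := P) (p := ENNReal.ofReal q) f two_pos
  rw [← ENNReal.ofReal_mul hq, mul_comm q 2] at hpow
  simpa only [Real.norm_eq_abs, Real.rpow_two, sq_abs, ENNReal.rpow_two] using hpow

lemma eLpNorm_sum_const_mul_le {ι : Type*} {s : Finset ι} {a : ι → ℝ} {g : ι → Ω → ℝ} {p A : ℝ≥0∞}
    (hp : 1 ≤ p) (ha : ∀ i ∈ s, 0 ≤ a i) (hg : ∀ i ∈ s, AEStronglyMeasurable (g i) P)
    (hgA : ∀ i ∈ s, eLpNorm (g i) p P ≤ A) :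
    eLpNorm (fun ω => ∑ i ∈ s, a i * g i ω) p P ≤ ENNReal.ofReal (∑ i ∈ s, a i) * A := by
  have hsum : (fun ω => ∑ i ∈ s, a i * g i ω) = ∑ i ∈ s, a i • g i := by
    ext
    simp
  rw [hsum, ENNReal.ofReal_sum_of_nonneg ha, Finset.sum_mul]
  refine (eLpNorm_sum_le (fun i hi => (hg i hi).const_smul (a i)) hp).trans
    (Finset.sum_le_sum fun i hi => ?_)
  rw [eLpNorm_const_smul, Real.enorm_of_nonneg (ha i hi)]
  exact mul_le_mul_right (hgA i hi) _

lemma eLpNorm_le_of_ae_eventually_norm_le {E : Type*} [NormedAddCommGroup E] {g : Ω → E}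
    {Y : ℕ → Ω → E} {p R : ℝ≥0∞} (hp : p ≠ 0) (hp_top : p ≠ ⊤)
    (hY : ∀ i, AEStronglyMeasurable (Y i) P)
    (hgY : ∀ᵐ ω ∂P, ∀ᶠ i in atTop, ‖g ω‖ ≤ ‖Y i ω‖)
    (hYR : ∀ᶠ i in atTop, eLpNorm (Y i) p P ≤ R) : eLpNorm g p P ≤ R := by
  have hp_pos : 0 < p.toReal := ENNReal.toReal_pos hp hp_top
  simp only [eLpNorm_eq_lintegral_rpow_enorm_toReal hp hp_top, one_div,
    ENNReal.rpow_inv_le_iff hp_pos] at hYR ⊢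
  calc ∫⁻ ω, ‖g ω‖ₑ ^ p.toReal ∂P ≤ ∫⁻ ω, liminf (fun i => ‖Y i ω‖ₑ ^ p.toReal) atTop ∂P := by
        refine lintegral_mono_ae (hgY.mono fun ω hω => le_liminf_of_le (by isBoundedDefault) ?_)
        exact hω.mono fun i hi => ENNReal.rpow_le_rpow (enorm_le_iff_norm_le.2 hi) hp_pos.le
    _ ≤ liminf (fun i => ∫⁻ ω, ‖Y i ω‖ₑ ^ p.toReal ∂P) atTop :=
        lintegral_liminf_le' fun i => (hY i).enorm.pow_const _
    _ ≤ R ^ p.toReal := liminf_le_of_frequently_le' hYR.frequently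

end LpNorm

/-- The maximal function `max_{k ≤ n} |∑_{j < k} X_j ξ_j|` of a discrete stochastic integral. -/
def discreteIntegralMax {Ω : Type*} (X ξ : ℕ → Ω → ℝ) (n : ℕ) : Ω → ℝ :=
  partialSups (fun k ω => |discreteIntegral X ξ k ω|) n

section DiscreteIntegralMax

variable {Ω : Type*} {mΩ : MeasurableSpace Ω} {P : Measure Ω} {ξ X : ℕ → Ω → ℝ}
  {𝒢 : Filtration ℕ mΩ} {v : ℕ → ℝ≥0} {q K : ℝ} {n : ℕ}

lemma discreteIntegral_le_discreteIntegralMax (X ξ : ℕ → Ω → ℝ) {k : ℕ} (hk : k ≤ n) (ω : Ω) :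
    discreteIntegral X ξ k ω ≤ discreteIntegralMax X ξ n ω :=
  (le_abs_self _).trans (le_partialSups_of_le (fun k ω => |discreteIntegral X ξ k ω|) hk ω)

lemma discreteIntegralMax_nonneg (X ξ : ℕ → Ω → ℝ) (n : ℕ) : 0 ≤ discreteIntegralMax X ξ n :=
  partialSups_nonneg (fun _ _ => abs_nonneg _) n

namespace IsGaussianNoise

lemma measurable_discreteIntegralMax (hξ : IsGaussianNoise ξ 𝒢 v P)
    (hX : ∀ j, Measurable[𝒢 j] (X j)) : Measurable (discreteIntegralMax X ξ n) :=
  (stronglyMeasurable_partialSups fun k _ =>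
    ((hξ.measurable_discreteIntegral hX k).mono (𝒢.le k) le_rfl).norm.stronglyMeasurable).measurable

lemma eLpNorm_discreteIntegralMax_le [IsFiniteMeasure P] (hξ : IsGaussianNoise ξ 𝒢 v P)
    (hq : 1 < q) (hK : 0 ≤ K) (hX : ∀ j, Measurable[𝒢 j] (X j))
    (hX_int : ∀ j, Integrable (fun ω => |X j ω| ^ q) P)
    (hMK : ∫ ω, |discreteIntegral X ξ n ω| ^ q ∂P ≤ K ^ q) :
    eLpNorm (discreteIntegralMax X ξ n) (ENNReal.ofReal q) P
      ≤ ENNReal.ofReal (q / (q - 1) * K) := by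
  have hq0 : 0 < q := by linarith
  have hratio : 0 ≤ q / (q - 1) := div_nonneg hq0.le (by linarith)
  have hX1 (j : ℕ) : Integrable (X j) P := by
    have hmem := (memLp_ofReal_iff_integrable_abs_rpow hq0
      ((hX j).mono (𝒢.le j) le_rfl).aestronglyMeasurable).2 (hX_int j)
    exact hmem.integrable (ENNReal.one_le_ofReal.2 hq.le)
  have hsub := submartingale_abs_of_martingale (hξ.martingale_discreteIntegral hX hX1)
  have hint := hξ.integrable_abs_discreteIntegral_rpow hq0 hX hX_int
  have hnonneg : 0 ≤ fun k ω => |discreteIntegral X ξ k ω| := fun k ω => abs_nonneg _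
  have hdoob := integral_partialSups_rpow_le hq hsub hnonneg hint n
  rw [eLpNorm_ofReal_le_ofReal_iff hq0 (by positivity)
    (hξ.measurable_discreteIntegralMax hX).aestronglyMeasurable]
  simp only [abs_of_nonneg (discreteIntegralMax_nonneg X ξ n _), Real.mul_rpow hratio hK]
  refine ⟨integrable_partialSups_rpow hq0.le hnonneg hint n, hdoob.trans ?_⟩
  gcongr

end IsGaussianNoise

lemma exists_eLpNorm_discreteIntegralMax_le (P : Measure Ω) [IsFiniteMeasure P] {B V : ℝ}
    (hq : 2 ≤ q) (hB : 0 ≤ B) (hV : 0 < V) (hK : √(q * (q - 1) / 2 * V) * B < K) :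
    ∃ δ > (0 : ℝ), ∀ {ξ X : ℕ → Ω → ℝ} {𝒢 : Filtration ℕ mΩ} {v : ℕ → ℝ≥0} {n : ℕ},
      IsGaussianNoise ξ 𝒢 v P → (∀ j, Measurable[𝒢 j] (X j)) →
      (∀ j, eLpNorm (X j) (ENNReal.ofReal q) P ≤ ENNReal.ofReal B) →
      (∀ j, (v j : ℝ) ≤ δ) → ∑ j ∈ Finset.range n, (v j : ℝ) ≤ V →
      eLpNorm (discreteIntegralMax X ξ n) (ENNReal.ofReal q) P
        ≤ ENNReal.ofReal (q / (q - 1) * K) := by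
  have hK0 : 0 ≤ K := (by positivity : 0 ≤ √(q * (q - 1) / 2 * V) * B).trans hK.le
  obtain ⟨δ, hδ, hmoment⟩ := exists_integral_abs_discreteIntegral_rpow_le P hq hB hV hK
  refine ⟨δ, hδ, fun {ξ X 𝒢 v n} hξ hX hXB hv hvV => ?_⟩
  have hX_moment (j : ℕ) := (eLpNorm_ofReal_le_ofReal_iff (by linarith) hB
    ((hX j).mono (𝒢.le j) le_rfl).aestronglyMeasurable).1 (hXB j)
  exact hξ.eLpNorm_discreteIntegralMax_le (by linarith) hK0 hX (fun j => (hX_moment j).1)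
    (hmoment hξ hX (fun j => (hX_moment j).1) (fun j => (hX_moment j).2) hv hvV)

end DiscreteIntegralMax

section BrownianIncrements

variable {Ω : Type*} {mΩ : MeasurableSpace Ω}

/-- `W` has the increments of a Brownian motion on `[0, T]` relative to `𝓕`: the increment over
`[s, t]` is centred Gaussian with variance `t - s` and independent of `𝓕 s`. The initial value is
not prescribed. -/
structure HasBrownianIncrementsOn (W : ℝ → Ω → ℝ) (𝓕 : Filtration ℝ mΩ) (T : ℝ)
    (P : Measure Ω) : Prop where
  measurable (t : ℝ) (ht : t ∈ Icc 0 T) : Measurable[𝓕 t] (W t)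
  map_sub (s t : ℝ) (hs : 0 ≤ s) (hst : s ≤ t) (ht : t ≤ T) :
    P.map (fun ω => W t ω - W s ω) = gaussianReal 0 (t - s).toNNReal
  indep_sub (s t : ℝ) (hs : 0 ≤ s) (hst : s ≤ t) (ht : t ≤ T) :
    Indep (MeasurableSpace.comap (fun ω => W t ω - W s ω) inferInstance) (𝓕 s) P

/-- The filtration `𝓕` observed at the points `τ 0 ≤ τ 1 ≤ ⋯` only. -/
def sampledFiltration (𝓕 : Filtration ℝ mΩ) {τ : ℕ → ℝ} (hτ : Monotone τ) : Filtration ℕ mΩ where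
  seq j := 𝓕 (τ j)
  mono' _ _ hij := 𝓕.mono (hτ hij)
  le' j := 𝓕.le (τ j)

/-- The increments of `W` along the points `τ 0, τ 1, …`. -/
def increments (W : ℝ → Ω → ℝ) (τ : ℕ → ℝ) (j : ℕ) (ω : Ω) : ℝ := W (τ (j + 1)) ω - W (τ j) ω

variable {P : Measure Ω} {𝓕 : Filtration ℝ mΩ} {W : ℝ → Ω → ℝ} {T : ℝ}

lemma HasBrownianIncrementsOn.isGaussianNoise_increments (hW : HasBrownianIncrementsOn W 𝓕 T P)
    {τ : ℕ → ℝ} {n : ℕ} (hτ : IsPartition τ T n) :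
    IsGaussianNoise (increments W τ) (sampledFiltration 𝓕 hτ.monotone)
      (fun j => (τ (j + 1) - τ j).toNNReal) P where
  measurable_succ j := (hW.measurable _ (hτ.mem_Icc (j + 1))).sub
    ((hW.measurable _ (hτ.mem_Icc j)).mono (𝓕.mono (hτ.monotone j.le_succ)) le_rfl)
  map_eq j := hW.map_sub _ _ (hτ.mem_Icc j).1 (hτ.monotone j.le_succ) (hτ.mem_Icc (j + 1)).2
  indep j := hW.indep_sub _ _ (hτ.mem_Icc j).1 (hτ.monotone j.le_succ) (hτ.mem_Icc (j + 1)).2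

lemma HasBrownianIncrementsOn.tendstoInMeasure_sum_sq_increments [IsProbabilityMeasure P]
    (hW : HasBrownianIncrementsOn W 𝓕 T P) {τ : ℕ → ℕ → ℝ} {N : ℕ → ℕ} {r : ℕ → ℝ}
    (hτ : ∀ i, IsPartition (τ i) T (N i)) (hτr : ∀ i j, τ i (j + 1) - τ i j ≤ r i)
    (hr : Tendsto r atTop (nhds 0)) :
    TendstoInMeasure P (fun i ω => ∑ j ∈ Finset.range (N i), increments W (τ i) j ω ^ 2) atTop
      (fun _ => T) := by
  rw [tendstoInMeasure_iff_norm]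
  intro ε hε
  have hlim : Tendsto (fun i => ENNReal.ofReal (r i * T * gaussianAbsMoment 4 / ε ^ 2)) atTop
      (nhds 0) := by
    simpa using ENNReal.tendsto_ofReal
      (((hr.mul_const T).mul_const (gaussianAbsMoment 4)).div_const (ε ^ 2))
  refine tendsto_of_tendsto_of_tendsto_of_le_of_le tendsto_const_nhds hlim (fun _ => zero_le) ?_
  intro i
  have hcheb := (hW.isGaussianNoise_increments (hτ i)).measure_le_abs_sum_sq_sub_le (N i) hε
  simp only [Real.coe_toNNReal _ ((hτ i).sub_nonneg _), (hτ i).sum_sub] at hcheb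
  refine hcheb.trans (ENNReal.ofReal_le_ofReal ?_)
  have hfour := gaussianAbsMoment_nonneg 4
  have hsq := (hτ i).sum_sq_sub_le (hτr i)
  gcongr

/-- The points `0, h, 2 h, …` with `h = T / (n + 1)`, frozen at `T`. -/
def uniformPartition (T : ℝ) (n j : ℕ) : ℝ := min (j * (T / (n + 1))) T

lemma isPartition_uniformPartition (hT : 0 ≤ T) (n : ℕ) :
    IsPartition (uniformPartition T n) T (n + 1) where
  monotone i j hij := by
    unfold uniformPartition
    gcongr
  zero := by simp [uniformPartition, hT]
  eq_of_le j hj := by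
    have hj' : (n : ℝ) + 1 ≤ j := by exact_mod_cast hj
    refine min_eq_right ?_
    calc T = (n + 1) * (T / (n + 1)) := by field_simp
      _ ≤ j * (T / (n + 1)) := by gcongr

lemma uniformPartition_succ_sub_le (hT : 0 ≤ T) (n j : ℕ) :
    uniformPartition T n (j + 1) - uniformPartition T n j ≤ T / (n + 1) := by
  have hmesh : 0 ≤ T / (n + 1) := by positivity
  have hsucc : ((j + 1 : ℕ) : ℝ) * (T / (n + 1)) = j * (T / (n + 1)) + T / (n + 1) := by
    push_cast
    ring
  rw [sub_le_iff_le_add', uniformPartition, uniformPartition, hsucc, ← min_add_add_right]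
  gcongr
  linarith

lemma HasBrownianIncrementsOn.exists_isPartition_tendsto_sum_sq_increments [IsProbabilityMeasure P]
    (hW : HasBrownianIncrementsOn W 𝓕 T P) (hT : 0 ≤ T) :
    ∃ (τ : ℕ → ℕ → ℝ) (N : ℕ → ℕ) (r : ℕ → ℝ), (∀ i, IsPartition (τ i) T (N i)) ∧
      (∀ i j, τ i (j + 1) - τ i j ≤ r i) ∧ Tendsto r atTop (nhds 0) ∧
      ∀ᵐ ω ∂P, Tendsto (fun i => ∑ j ∈ Finset.range (N i), increments W (τ i) j ω ^ 2) atTop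
        (nhds T) := by
  have hr : Tendsto (fun n : ℕ => T / ((n : ℝ) + 1)) atTop (nhds 0) := by
    simpa only [mul_one_div, mul_zero] using tendsto_one_div_add_atTop_nhds_zero_nat.const_mul T
  obtain ⟨ns, hns, hae⟩ := (hW.tendstoInMeasure_sum_sq_increments
    (isPartition_uniformPartition hT) (uniformPartition_succ_sub_le hT) hr).exists_seq_tendsto_ae
  exact ⟨fun i => uniformPartition T (ns i), fun i => ns i + 1, fun i => T / (ns i + 1),
    fun i => isPartition_uniformPartition hT (ns i),
    fun i => uniformPartition_succ_sub_le hT (ns i), hr.comp hns.tendsto_atTop, hae⟩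

end BrownianIncrements

lemma ae_forall_eq_of_continuousOn {Ω α β : Type*} {mΩ : MeasurableSpace Ω} {P : Measure Ω}
    [TopologicalSpace α] [SecondCountableTopology α] [TopologicalSpace β] [T2Space β]
    {s : Set α} {f g : α → Ω → β} (hf : ∀ᵐ ω ∂P, ContinuousOn (fun t => f t ω) s)
    (hg : ∀ᵐ ω ∂P, ContinuousOn (fun t => g t ω) s) (hfg : ∀ t ∈ s, ∀ᵐ ω ∂P, f t ω = g t ω) :
    ∀ᵐ ω ∂P, ∀ t ∈ s, f t ω = g t ω := by
  obtain ⟨d, hd_countable, hd_dense⟩ := TopologicalSpace.exists_countable_dense s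
  have hdense_eq : ∀ᵐ ω ∂P, ∀ t ∈ d, f t ω = g t ω :=
    (ae_ball_iff hd_countable).2 fun t _ => hfg t t.2
  filter_upwards [hf, hg, hdense_eq] with ω hf hg hdense_eq t ht
  exact congrFun (hf.domRestrict.ext_on hd_dense hg.domRestrict hdense_eq) ⟨t, ht⟩

lemma ae_forall_sub_eq_integral_add {Ω : Type*} {mΩ : MeasurableSpace Ω} {P : Measure Ω} {T : ℝ}
    {W X b : ℝ → Ω → ℝ} (hT : 0 ≤ T) (hX : ∀ᵐ ω ∂P, ContinuousOn (fun t => X t ω) (Icc 0 T))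
    (hW : ∀ᵐ ω ∂P, ContinuousOn (fun t => W t ω) (Icc 0 T))
    (hb : ∀ᵐ ω ∂P, IntervalIntegrable (fun s => b s ω) volume 0 T)
    (hSDE : ∀ t ∈ Icc 0 T, ∀ᵐ ω ∂P, X t ω = X 0 ω + (∫ s in (0 : ℝ)..t, b s ω) + W t ω) :
    ∀ᵐ ω ∂P, ∀ t ∈ Icc 0 T, X t ω = X 0 ω + (∫ s in (0 : ℝ)..t, b s ω) + W t ω := by
  refine ae_forall_eq_of_continuousOn hX ?_ hSDE
  filter_upwards [hW, hb] with ω hW hb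
  have hprim := intervalIntegral.continuousOn_primitive_interval' hb left_mem_uIcc
  rw [uIcc_of_le hT] at hprim
  exact (continuousOn_const.add hprim).add hW

section Majorant

variable {Ω : Type*} {mΩ : MeasurableSpace Ω} {P : Measure Ω} {c a T : ℝ} {W X : ℝ → Ω → ℝ}

/-- Random upper bound for `sup_t X_t ^ 2` read off from the values of `X` and `W` along `τ`: the
initial value, the drift as a Riemann sum, the maximum of the discretised stochastic integral, and a
constant `a` accounting for the quadratic variation of `W` and for discretisation errors. -/
def supSqMajorant (c a : ℝ) (X W : ℝ → Ω → ℝ) (τ : ℕ → ℝ) (n : ℕ) (ω : Ω) : ℝ :=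
  X 0 ω ^ 2 + 2 * c * ∑ j ∈ Finset.range n, (τ (j + 1) - τ j) * X (τ j) ω ^ 2
    + 2 * discreteIntegralMax (fun j => X (τ j)) (increments W τ) n ω + a

lemma eventually_iSup_sq_le_supSqMajorant {ω : Ω} {b : ℝ → ℝ} {τ : ℕ → ℕ → ℝ} {N : ℕ → ℕ}
    {r : ℕ → ℝ} (hc : 0 ≤ c) (hT : 0 ≤ T) (hX : ContinuousOn (fun t => X t ω) (Icc 0 T))
    (hW : ContinuousOn (fun t => W t ω) (Icc 0 T)) (hb : IntervalIntegrable b volume 0 T)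
    (hSDE : ∀ t ∈ Icc 0 T, X t ω = X 0 ω + (∫ s in (0 : ℝ)..t, b s) + W t ω)
    (hdrift : ∀ s ∈ Icc 0 T, X s ω * b s ≤ c * (1 + X s ω ^ 2))
    (hτ : ∀ i, IsPartition (τ i) T (N i)) (hτr : ∀ i j, τ i (j + 1) - τ i j ≤ r i)
    (hr : Tendsto r atTop (nhds 0))
    (hqv : Tendsto (fun i => ∑ j ∈ Finset.range (N i), increments W (τ i) j ω ^ 2) atTop (nhds T))
    (ha : T * (2 * c + 1) < a) :
    ∀ᶠ i in atTop, ⨆ t : Icc 0 T, X t ω ^ 2 ≤ supSqMajorant c a X W (τ i) (N i) ω := by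
  have : Nonempty (Icc 0 T) := ⟨0, left_mem_Icc.2 hT⟩
  obtain ⟨ε, hε, hεa⟩ : ∃ ε > 0, T * (2 * c + 1) + 2 * ε = a :=
    ⟨(a - T * (2 * c + 1)) / 2, by linarith, by ring⟩
  obtain ⟨δ, hδ, hpath⟩ := exists_mesh_forall_sq_le hc hT hX hW hb hSDE hdrift hε
  filter_upwards [hr.eventually_le_const hδ, hqv.eventually_le_const (lt_add_of_pos_right T hε)]
    with i hri hqvi
  refine ciSup_le fun t => ?_
  obtain ⟨k, hk, hXt⟩ := hpath (hτ i) (fun j => (hτr i j).trans hri) t t.2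
  have hmax := discreteIntegral_le_discreteIntegralMax (fun j => X (τ i j)) (increments W (τ i))
    hk ω
  unfold discreteIntegral at hmax
  unfold increments at hmax hqvi
  unfold supSqMajorant increments
  linarith

lemma HasBrownianIncrementsOn.aestronglyMeasurable_discreteIntegralMax {𝓕 : Filtration ℝ mΩ}
    (hW : HasBrownianIncrementsOn W 𝓕 T P) (hX : ∀ t ∈ Icc 0 T, Measurable[𝓕 t] (X t))
    {τ : ℕ → ℝ} {n : ℕ} (hτ : IsPartition τ T n) :
    AEStronglyMeasurable (discreteIntegralMax (fun j => X (τ j)) (increments W τ) n) P :=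
  ((hW.isGaussianNoise_increments hτ).measurable_discreteIntegralMax fun j =>
    hX _ (hτ.mem_Icc j)).aestronglyMeasurable

lemma aestronglyMeasurable_supSqMajorant (hT : 0 ≤ T)
    (hX : ∀ t ∈ Icc 0 T, AEStronglyMeasurable (X t) P) {τ : ℕ → ℝ} {n : ℕ}
    (hτ : IsPartition τ T n)
    (hM : AEStronglyMeasurable (discreteIntegralMax (fun j => X (τ j)) (increments W τ) n) P) :
    AEStronglyMeasurable (supSqMajorant c a X W τ n) P := by
  have hsum : AEStronglyMeasurable
      (fun ω => ∑ j ∈ Finset.range n, (τ (j + 1) - τ j) * X (τ j) ω ^ 2) P :=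
    Finset.aestronglyMeasurable_fun_sum _ fun j _ => ((hX _ (hτ.mem_Icc j)).pow 2).const_mul _
  exact ((((hX 0 (left_mem_Icc.2 hT)).pow 2).add (hsum.const_mul (2 * c))).add
    (hM.const_mul 2)).add aestronglyMeasurable_const

lemma eLpNorm_supSqMajorant_le [IsProbabilityMeasure P] {p A R : ℝ≥0∞} (hp : 1 ≤ p) (hc : 0 ≤ c)
    (ha : 0 ≤ a) (hT : 0 ≤ T) (hX : ∀ t ∈ Icc 0 T, AEStronglyMeasurable (X t) P)
    (hXA : ∀ t ∈ Icc 0 T, eLpNorm (fun ω => X t ω ^ 2) p P ≤ A) {τ : ℕ → ℝ} {n : ℕ}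
    (hτ : IsPartition τ T n)
    (hM : AEStronglyMeasurable (discreteIntegralMax (fun j => X (τ j)) (increments W τ) n) P)
    (hMR : eLpNorm (discreteIntegralMax (fun j => X (τ j)) (increments W τ) n) p P ≤ R) :
    eLpNorm (supSqMajorant c a X W τ n) p P
      ≤ eLpNorm (fun ω => X 0 ω ^ 2) p P + ENNReal.ofReal (2 * c * T) * A + 2 * R
        + ENNReal.ofReal a := by
  have hX0 : AEStronglyMeasurable (fun ω => X 0 ω ^ 2) P := (hX 0 (left_mem_Icc.2 hT)).pow 2
  have hXj (j : ℕ) : AEStronglyMeasurable (fun ω => X (τ j) ω ^ 2) P := (hX _ (hτ.mem_Icc j)).pow 2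
  have hsum : AEStronglyMeasurable
      (fun ω => ∑ j ∈ Finset.range n, (τ (j + 1) - τ j) * X (τ j) ω ^ 2) P :=
    Finset.aestronglyMeasurable_fun_sum _ fun j _ => (hXj j).const_mul _
  have hriemann := eLpNorm_sum_const_mul_le hp (fun j _ => hτ.sub_nonneg j) (fun j _ => hXj j)
    fun j (_ : j ∈ Finset.range n) => hXA _ (hτ.mem_Icc j)
  have hdrift : eLpNorm (fun ω => 2 * c * ∑ j ∈ Finset.range n, (τ (j + 1) - τ j) * X (τ j) ω ^ 2)
      p P ≤ ENNReal.ofReal (2 * c * T) * A := by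
    refine (eLpNorm_const_smul_le (c := 2 * c)).trans ?_
    rw [hτ.sum_sub] at hriemann
    rw [Real.enorm_of_nonneg (by positivity), ENNReal.ofReal_mul (by positivity : 0 ≤ 2 * c),
      mul_assoc]
    exact mul_le_mul_right hriemann _
  have hmart : eLpNorm (fun ω => 2 * discreteIntegralMax (fun j => X (τ j)) (increments W τ) n ω)
      p P ≤ 2 * R := by
    refine (eLpNorm_const_smul_le (c := (2 : ℝ))).trans ?_
    rw [Real.enorm_of_nonneg zero_le_two, ENNReal.ofReal_ofNat]
    exact mul_le_mul_right hMR _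
  have hconst : eLpNorm (fun _ => a) p P = ENNReal.ofReal a := by
    rw [eLpNorm_const _ (zero_lt_one.trans_le hp).ne' (IsProbabilityMeasure.ne_zero P),
      measure_univ, ENNReal.one_rpow, mul_one, Real.enorm_of_nonneg ha]
  have hX0_drift := hX0.add (hsum.const_mul (2 * c))
  refine (eLpNorm_add_le (hX0_drift.add (hM.const_mul 2)) aestronglyMeasurable_const hp).trans
    (add_le_add ((eLpNorm_add_le hX0_drift (hM.const_mul 2) hp).trans (add_le_add
      ((eLpNorm_add_le hX0 (hsum.const_mul (2 * c)) hp).trans (add_le_add le_rfl hdrift)) hmart))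
      hconst.le)

end Majorant

/-- `X` solves `dX_t = b_t dt + dW_t` on `[0, T]`, in integrated form, where `W` has Brownian
increments relative to `𝓕`. The processes `X` and `W` have continuous paths and `X` is adapted,
whereas the drift `b` need not be adapted. -/
structure IsAdditiveNoiseProcess {Ω : Type*} {mΩ : MeasurableSpace Ω} (X W b : ℝ → Ω → ℝ)
    (𝓕 : Filtration ℝ mΩ) (T : ℝ) (P : Measure Ω) : Prop where
  hasBrownianIncrementsOn : HasBrownianIncrementsOn W 𝓕 T P
  noise_continuousOn : ∀ᵐ ω ∂P, ContinuousOn (fun t => W t ω) (Icc 0 T)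
  adapted (t : ℝ) (ht : t ∈ Icc 0 T) : Measurable[𝓕 t] (X t)
  continuousOn : ∀ᵐ ω ∂P, ContinuousOn (fun t => X t ω) (Icc 0 T)
  intervalIntegrable : ∀ᵐ ω ∂P, IntervalIntegrable (fun s => b s ω) volume 0 T
  eq_add (t : ℝ) (ht : t ∈ Icc 0 T) :
    ∀ᵐ ω ∂P, X t ω = X 0 ω + (∫ s in (0 : ℝ)..t, b s ω) + W t ω

lemma sqrt_two_mul_mul_cube_div_sub_one {T q : ℝ} (hT : 0 ≤ T) (hq : 1 < q) :
    √(2 * T * q ^ 3 / (q - 1)) = 2 * (q / (q - 1) * √(q * (q - 1) / 2 * T)) := by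
  have hq1 : 0 < q - 1 := by linarith
  have : 0 < q := by linarith
  rw [Real.sqrt_eq_iff_eq_sq (by positivity) (by positivity), mul_pow, mul_pow,
    Real.sq_sqrt (by positivity)]
  field_simp

section MomentBound

variable {Ω : Type*} {mΩ : MeasurableSpace Ω} {P : Measure Ω} [IsProbabilityMeasure P]
  {X W b : ℝ → Ω → ℝ} {𝓕 : Filtration ℝ mΩ} {T c q : ℝ}

namespace IsAdditiveNoiseProcess

lemma eLpNorm_iSup_sq_le_of_lt (hX : IsAdditiveNoiseProcess X W b 𝓕 T P) (hT : 0 < T) (hc : 0 ≤ c)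
    (hq : 2 ≤ q) (hdrift : ∀ᵐ ω ∂P, ∀ s ∈ Icc 0 T, X s ω * b s ω ≤ c * (1 + X s ω ^ 2))
    {A : ℝ≥0∞} {B K a : ℝ} (hB : 0 ≤ B)
    (hXA : ∀ t ∈ Icc 0 T, eLpNorm (fun ω => X t ω ^ 2) (ENNReal.ofReal q) P ≤ A)
    (hXB : ∀ t ∈ Icc 0 T, eLpNorm (X t) (ENNReal.ofReal q) P ≤ ENNReal.ofReal B)
    (hK : √(q * (q - 1) / 2 * T) * B < K) (ha : T * (2 * c + 1) < a) :
    eLpNorm (fun ω => ⨆ t : Icc 0 T, X t ω ^ 2) (ENNReal.ofReal q) P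
      ≤ eLpNorm (fun ω => X 0 ω ^ 2) (ENNReal.ofReal q) P + ENNReal.ofReal (2 * c * T) * A
        + 2 * ENNReal.ofReal (q / (q - 1) * K) + ENNReal.ofReal a := by
  have hq_one : 1 ≤ ENNReal.ofReal q := ENNReal.one_le_ofReal.2 (by linarith)
  have hX_meas (t : ℝ) (ht : t ∈ Icc 0 T) : AEStronglyMeasurable (X t) P :=
    ((hX.adapted t ht).mono (𝓕.le t) le_rfl).aestronglyMeasurable
  have hW := hX.hasBrownianIncrementsOn
  obtain ⟨δ, hδ, hmax⟩ := exists_eLpNorm_discreteIntegralMax_le P hq hB hT hK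
  obtain ⟨τ, N, r, hτ, hτr, hr, hqv⟩ := hW.exists_isPartition_tendsto_sum_sq_increments hT.le
  have hM_meas (i : ℕ) := hW.aestronglyMeasurable_discreteIntegralMax hX.adapted (hτ i)
  refine eLpNorm_le_of_ae_eventually_norm_le (zero_lt_one.trans_le hq_one).ne' ENNReal.ofReal_ne_top
    (fun i => aestronglyMeasurable_supSqMajorant (c := c) (a := a) hT.le hX_meas (hτ i) (hM_meas i))
    ?_ ?_
  · filter_upwards [hX.continuousOn, hX.noise_continuousOn, hX.intervalIntegrable, hdrift, hqv,
      ae_forall_sub_eq_integral_add hT.le hX.continuousOn hX.noise_continuousOn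
        hX.intervalIntegrable hX.eq_add] with ω hXω hWω hbω hdriftω hqvω hSDEω
    refine (eventually_iSup_sq_le_supSqMajorant hc hT.le hXω hWω hbω hSDEω hdriftω hτ hτr hr hqvω
      ha).mono fun i hi => ?_
    have hsup : 0 ≤ ⨆ t : Icc 0 T, X t ω ^ 2 := Real.iSup_nonneg fun _ => sq_nonneg _
    rwa [Real.norm_of_nonneg hsup, Real.norm_of_nonneg (hsup.trans hi)]
  · filter_upwards [hr.eventually_le_const hδ] with i hri
    have ha0 : 0 ≤ a := (by positivity : 0 ≤ T * (2 * c + 1)).trans ha.le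
    refine eLpNorm_supSqMajorant_le hq_one hc ha0 hT.le hX_meas hXA (hτ i) (hM_meas i) ?_
    refine hmax (hW.isGaussianNoise_increments (hτ i)) (fun j => hX.adapted _ ((hτ i).mem_Icc j))
      (fun j => hXB _ ((hτ i).mem_Icc j)) (fun j => ?_) ?_
    · rw [Real.coe_toNNReal _ ((hτ i).sub_nonneg j)]
      exact (hτr i j).trans hri
    · simp only [Real.coe_toNNReal _ ((hτ i).sub_nonneg _), (hτ i).sum_sub, le_refl]

lemma eLpNorm_iSup_sq_le (hX : IsAdditiveNoiseProcess X W b 𝓕 T P) (hT : 0 < T) (hc : 0 ≤ c)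
    (hq : 2 ≤ q) (hdrift : ∀ᵐ ω ∂P, ∀ s ∈ Icc 0 T, X s ω * b s ω ≤ c * (1 + X s ω ^ 2))
    {A : ℝ≥0∞} {B : ℝ} (hB : 0 ≤ B)
    (hXA : ∀ t ∈ Icc 0 T, eLpNorm (fun ω => X t ω ^ 2) (ENNReal.ofReal q) P ≤ A)
    (hXB : ∀ t ∈ Icc 0 T, eLpNorm (X t) (ENNReal.ofReal q) P ≤ ENNReal.ofReal B) :
    eLpNorm (fun ω => ⨆ t : Icc 0 T, X t ω ^ 2) (ENNReal.ofReal q) P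
      ≤ eLpNorm (fun ω => X 0 ω ^ 2) (ENNReal.ofReal q) P + ENNReal.ofReal (2 * c * T) * A
        + ENNReal.ofReal √(2 * T * q ^ 3 / (q - 1)) * ENNReal.ofReal B
        + ENNReal.ofReal (T * (2 * c + 1)) := by
  let K : ℝ := √(q * (q - 1) / 2 * T) * B
  have hK : ENNReal.ofReal √(2 * T * q ^ 3 / (q - 1)) * ENNReal.ofReal B
      = 2 * ENNReal.ofReal (q / (q - 1) * K) := by
    rw [sqrt_two_mul_mul_cube_div_sub_one hT.le (by linarith), ← ENNReal.ofReal_mul' hB, mul_assoc,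
      ENNReal.ofReal_mul zero_le_two, ENNReal.ofReal_ofNat, mul_assoc]
  rw [hK]
  have hcont : Continuous fun ε : ℝ => eLpNorm (fun ω => X 0 ω ^ 2) (ENNReal.ofReal q) P
      + ENNReal.ofReal (2 * c * T) * A + 2 * ENNReal.ofReal (q / (q - 1) * (K + ε))
      + ENNReal.ofReal (T * (2 * c + 1) + ε) :=
    (continuous_const.add ((ENNReal.continuous_const_mul ENNReal.ofNat_ne_top).comp
      (ENNReal.continuous_ofReal.comp (by fun_prop)))).add
      (ENNReal.continuous_ofReal.comp (by fun_prop))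
  have hlim := (hcont.tendsto 0).mono_left (nhdsWithin_le_nhds (s := Ioi 0))
  simp only [add_zero] at hlim
  refine ge_of_tendsto hlim (eventually_nhdsWithin_of_forall fun ε hε => ?_)
  exact hX.eLpNorm_iSup_sq_le_of_lt hT hc hq hdrift hB hXA hXB (lt_add_of_pos_right _ hε)
    (lt_add_of_pos_right _ hε)

end IsAdditiveNoiseProcess

theorem sup_moment_bound_for_additive_noise_processes_general
    (hX : IsAdditiveNoiseProcess X W b 𝓕 T P) (hT : 0 ≤ T) (hc : 0 ≤ c) (hq : 2 ≤ q)
    (hdrift : ∀ᵐ ω ∂P, ∀ s ∈ Icc 0 T, X s ω * b s ω ≤ c * (1 + X s ω ^ 2)) :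
    eLpNorm (fun ω => ⨆ t : Icc (0 : ℝ) T, X t ω ^ 2) (ENNReal.ofReal q) P
      ≤ eLpNorm (fun ω => X 0 ω ^ 2) (ENNReal.ofReal q) P
        + ENNReal.ofReal (2 * c * T)
          * (⨆ s : Icc (0 : ℝ) T, eLpNorm (X s) (ENNReal.ofReal (2 * q)) P) ^ 2
        + ENNReal.ofReal √(2 * T * q ^ 3 / (q - 1))
          * (⨆ s : Icc (0 : ℝ) T, eLpNorm (X s) (ENNReal.ofReal q) P)
        + ENNReal.ofReal (T * (2 * c + 1)) := by
  rcases hT.eq_or_lt with rfl | hT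
  · have hsup (ω : Ω) : ⨆ t : Icc (0 : ℝ) 0, X t ω ^ 2 = X 0 ω ^ 2 := by
      have hzero (t : Icc (0 : ℝ) 0) : (t : ℝ) = 0 := le_antisymm t.2.2 t.2.1
      have : Nonempty (Icc (0 : ℝ) 0) := ⟨0, left_mem_Icc.2 le_rfl⟩
      simp only [hzero, ciSup_const]
    simp only [hsup, add_assoc, le_self_add]
  set B := ⨆ s : Icc (0 : ℝ) T, eLpNorm (X s) (ENNReal.ofReal q) P
  rcases eq_or_ne B ⊤ with hB_top | hB_top
  · have hq1 : 0 < q - 1 := by linarith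
    have hconst : ENNReal.ofReal √(2 * T * q ^ 3 / (q - 1)) ≠ 0 :=
      (ENNReal.ofReal_pos.2 (by positivity)).ne'
    rw [hB_top, ENNReal.mul_top hconst, add_top, top_add]
    exact le_top
  have hXA (t : ℝ) (ht : t ∈ Icc 0 T) : eLpNorm (fun ω => X t ω ^ 2) (ENNReal.ofReal q) P
      ≤ (⨆ s : Icc (0 : ℝ) T, eLpNorm (X s) (ENNReal.ofReal (2 * q)) P) ^ 2 := by
    rw [eLpNorm_sq _ (by linarith)]
    gcongr
    exact le_iSup_of_le (⟨t, ht⟩ : Icc 0 T) le_rfl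
  have hB_eq : ENNReal.ofReal B.toReal = B := ENNReal.ofReal_toReal hB_top
  have hXB (t : ℝ) (ht : t ∈ Icc 0 T) :
      eLpNorm (X t) (ENNReal.ofReal q) P ≤ ENNReal.ofReal B.toReal :=
    (le_iSup_of_le (⟨t, ht⟩ : Icc 0 T) le_rfl).trans_eq hB_eq.symm
  have hbound := hX.eLpNorm_iSup_sq_le hT hc hq hdrift ENNReal.toReal_nonneg hXA hXB
  rwa [hB_eq] at hbound

end MomentBound

lemma intervalIntegrable_comp_of_abs {μ x : ℝ → ℝ} {T : ℝ} (hT : 0 ≤ T) (hμ : Measurable μ)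
    (hx : ContinuousOn x (Icc 0 T))
    (hint : IntervalIntegrable (fun s => |μ (x s)|) volume 0 T) :
    IntervalIntegrable (fun s => μ (x s)) volume 0 T := by
  have hx_meas : AEMeasurable x (volume.restrict (uIoc 0 T)) := by
    rw [uIoc_of_le hT]
    exact (hx.mono Ioc_subset_Icc_self).aemeasurable measurableSet_Ioc
  exact (IntervalIntegrable.intervalIntegrable_norm_iff
    (hμ.comp_aemeasurable hx_meas).aestronglyMeasurable).1 hint

lemma mul_le_mul_one_add_sq_of_forall_pos {μ : ℝ → ℝ} {c x : ℝ} (hc : 0 ≤ c) (hx : 0 ≤ x)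
    (hμ : ∀ y, 0 < y → y * μ y ≤ c * (1 + y ^ 2)) : x * μ x ≤ c * (1 + x ^ 2) := by
  rcases hx.eq_or_lt with rfl | hx
  · simpa using hc
  · exact hμ x hx

theorem sup_moment_bound_for_additive_noise_processes
    {Ω : Type*} [MeasurableSpace Ω] (P : Measure Ω) [IsProbabilityMeasure P]
    (T : ℝ) (hT : 0 ≤ T)
    (F : ℝ → MeasurableSpace Ω)
    (hF_mono : ∀ s t : ℝ, s ≤ t → F s ≤ F t)
    (hF_le : ∀ t : ℝ, F t ≤ (inferInstance : MeasurableSpace Ω))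
    (μ : ℝ → ℝ) (hμmeas : Measurable μ)
    (W X : ℝ → Ω → ℝ)
    (hW0 : ∀ ω, W 0 ω = 0)
    (hWadapt : ∀ t ∈ Set.Icc (0:ℝ) T, @Measurable Ω ℝ (F t) _ (W t))
    (hWcont : ∀ ω, ContinuousOn (fun t => W t ω) (Set.Icc 0 T))
    (hWlaw : ∀ s t : ℝ, 0 ≤ s → s ≤ t → t ≤ T →
      Measure.map (fun ω => W t ω - W s ω) P = gaussianReal 0 (Real.toNNReal (t - s)))
    (hWindep : ∀ s t : ℝ, 0 ≤ s → s ≤ t → t ≤ T →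
      Indep (MeasurableSpace.comap (fun ω => W t ω - W s ω) inferInstance) (F s) P)
    (hXnonneg : ∀ t ω, 0 ≤ X t ω)
    (hXadapt : ∀ t ∈ Set.Icc (0:ℝ) T, @Measurable Ω ℝ (F t) _ (X t))
    (hXcont : ∀ ω, ContinuousOn (fun t => X t ω) (Set.Icc 0 T))
    (hXint : ∀ᵐ ω ∂P, IntervalIntegrable (fun s => |μ (X s ω)|) volume 0 T)
    (hSDE : ∀ t ∈ Set.Icc (0:ℝ) T, ∀ᵐ ω ∂P,
      X t ω = X 0 ω + (∫ s in (0:ℝ)..t, μ (X s ω)) + W t ω)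
    (c q : ℝ) (hc : 0 ≤ c) (hq : 2 ≤ q)
    (hdrift : ∀ x : ℝ, 0 < x → x * μ x ≤ c * (1 + x ^ 2)) :
    eLpNorm (fun ω => ⨆ t : Set.Icc (0:ℝ) T, (X t.1 ω) ^ 2) (ENNReal.ofReal q) P
      ≤ eLpNorm (fun ω => (X 0 ω) ^ 2) (ENNReal.ofReal q) P
        + ENNReal.ofReal (2 * c * T) *
            (⨆ s : Set.Icc (0:ℝ) T, eLpNorm (fun ω => X s.1 ω) (ENNReal.ofReal (2 * q)) P) ^ 2
        + ENNReal.ofReal (Real.sqrt (2 * T * q ^ 3 / (q - 1))) *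
            (⨆ s : Set.Icc (0:ℝ) T, eLpNorm (fun ω => X s.1 ω) (ENNReal.ofReal q) P)
        + ENNReal.ofReal (T * (2 * c + 1)) := by
  have hX : IsAdditiveNoiseProcess X W (fun s ω => μ (X s ω)) ⟨F, hF_mono, hF_le⟩ T P :=
    { hasBrownianIncrementsOn := ⟨hWadapt, hWlaw, hWindep⟩
      noise_continuousOn := .of_forall hWcont
      adapted := hXadapt
      continuousOn := .of_forall hXcont
      intervalIntegrable := hXint.mono fun ω =>
        intervalIntegrable_comp_of_abs hT hμmeas (hXcont ω)
      eq_add := hSDE }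
  exact sup_moment_bound_for_additive_noise_processes_general hX hT hc hq
    (.of_forall fun ω s _ => mul_le_mul_one_add_sq_of_forall_pos hc (hXnonneg s ω) hdrift)

end
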